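/- arXiv:1712.01167 — 2 statements merged into one kernel-verified Lean document; each statement's English description precedes it below -/
import Mathlib

section
/- Let F be a nonzero homogeneous polynomial of degree 3 in k[x₀,x₁,x₂,x₃] such that the cubic surface V(F) is smooth. Then the stabilizer of V(F) in PGL₄(k), i.e., the image in PGL₄(k) of the subgroup {A ∈ GL₄(k) : A leaves V(F) invariant} of GL₄(k), is a finite group of cardinality at most 25920. -/
open MvPolynomial Matrix

/-- The polynomial `F(A·x)`, obtained from `F` by substituting
`xᵢ ↦ ∑ⱼ Aᵢⱼ xⱼ`. -/
noncomputable def substMatrix {k : Type*} [Field k] (A : Matrix (Fin 4) (Fin 4) k)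
    (F : MvPolynomial (Fin 4) k) : MvPolynomial (Fin 4) k :=
  aeval (fun i => ∑ j, C (A i j) * X j) F

/-- A matrix `A` leaves the cubic surface `V(F)` invariant if `F(A·x) = λ·F(x)`
for some `λ ∈ kˣ`. -/
def LeavesInvariant {k : Type*} [Field k] (A : Matrix (Fin 4) (Fin 4) k)
    (F : MvPolynomial (Fin 4) k) : Prop :=
  ∃ lam : kˣ, substMatrix A F = (lam : k) • F

/-- The subgroup of scalar matrices in `GL₄(k)`; `PGL₄(k)` is the quotient
of `GL₄(k)` by this subgroup. -/
def scalarSubgroup (k : Type*) [Field k] : Subgroup (GL (Fin 4) k) :=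
  (Units.map (algebraMap k (Matrix (Fin 4) (Fin 4) k)).toMonoidHom).range

/-!
A smooth cubic surface contains a line, at most `27` lines in all, and exactly five planes through
a given line `L` meet the surface in `L` and two further lines. Hence the group of similitudes moves
`L` among at most `27` lines, and the stabilizer of `L` permutes the ten lines in the five planes,
compatibly with the planes. Fixing in turn one line in each of the first four planes costs indices
at most `10`, `8`, `6` and `2`: once the lines in three of the planes are fixed, the action on the
pencil of planes is trivial, so that a line in the fourth plane can only move inside its plane.
What fixes all of these lines is scalar, and `27 * 10 * 8 * 6 * 2 = 25920`.

Every line meets one of the three lines in such a plane, and each of these meets eight lines outside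
the plane: this gives `27 = 3 + 3 * 8`. The planes are the zeros of the discriminant of the residual
conic, a quintic form on the pencil which smoothness of the surface makes separable.

A line exists on every cubic surface `c = 0`: a line on `x₂ x₀² + x₃ x₁² = 0` lifts by successive
approximation to a line on `x₂ x₀² + x₃ x₁² + t c = 0` over the power series in `t`. As `t` is not
integral over `k`, some valuation ring of the field of fractions contains `k` and has `1 / t` in its
maximal ideal, and there the line on `t⁻¹ (x₂ x₀² + x₃ x₁²) + c = 0` specializes to a line on
`c = 0` over the residue field. By the Nullstellensatz there is then one over `k`.
-/

namespace CubicSurface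

section Polarization

variable {k V : Type*} [CommRing k] [AddCommGroup V] [Module k V]

/-- Trilinear forms on `V`. They encode cubic forms through `CubicSurface.cubic`, which reaches
every cubic form in every characteristic since no symmetry is required. -/
abbrev TrilinearForm (k V : Type*) [CommRing k] [AddCommGroup V] [Module k V] :=
  V →ₗ[k] V →ₗ[k] V →ₗ[k] k

/-- The cubic form `x ↦ T x x x`. -/
def cubic (T : TrilinearForm k V) (x : V) : k := T x x x

/-- The differential of `cubic T` at `p`: the polarization that is quadratic in `p` and linear in
its last argument. -/
def polar (T : TrilinearForm k V) (p : V) : V →ₗ[k] k :=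
  (T.flip p).flip p + (T p).flip p + T p p

/-- The second differential of `cubic T`: its full polarization, the sum of `T` over the
permutations of its arguments. -/
def hessian (T : TrilinearForm k V) : TrilinearForm k V :=
  LinearMap.mk₂ k
    (fun p q => T p q + T q p + (T p).flip q + (T q).flip p + (T.flip p).flip q + (T.flip q).flip p)
    (fun _ _ _ => by
      ext; simp only [map_add, LinearMap.add_apply, LinearMap.flip_apply]; ring)
    (fun _ _ _ => by
      ext; simp only [map_smul, LinearMap.add_apply, LinearMap.smul_apply, LinearMap.flip_apply,
        smul_eq_mul]; ring)
    (fun _ _ _ => by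
      ext; simp only [map_add, LinearMap.add_apply, LinearMap.flip_apply]; ring)
    (fun _ _ _ => by
      ext; simp only [map_smul, LinearMap.add_apply, LinearMap.smul_apply, LinearMap.flip_apply,
        smul_eq_mul]; ring)

variable (T : TrilinearForm k V)

lemma polar_apply (p w : V) : polar T p w = T w p p + T p w p + T p p w := rfl

lemma hessian_apply (p q w : V) :
    hessian T p q w = T p q w + T q p w + T p w q + T q w p + T w p q + T w q p := rfl

lemma cubic_add (x y : V) :
    cubic T (x + y) = cubic T x + polar T x y + polar T y x + cubic T y := by
  simp only [cubic, polar_apply, map_add, LinearMap.add_apply]; ring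

lemma cubic_smul (c : k) (x : V) : cubic T (c • x) = c ^ 3 * cubic T x := by
  simp only [cubic, map_smul, LinearMap.smul_apply, smul_eq_mul]; ring

lemma polar_add_left (p q w : V) :
    polar T (p + q) w = polar T p w + polar T q w + hessian T p q w := by
  simp only [polar_apply, hessian_apply, map_add, LinearMap.add_apply]; ring

lemma polar_smul_left (c : k) (p w : V) : polar T (c • p) w = c ^ 2 * polar T p w := by
  simp only [polar_apply, map_smul, LinearMap.smul_apply, smul_eq_mul]; ring

lemma polar_self (p : V) : polar T p p = 3 * cubic T p := by
  simp only [polar_apply, cubic]; ring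

lemma hessian_swap_left (p q r : V) : hessian T p q r = hessian T q p r := by
  simp only [hessian_apply]; ring

lemma hessian_swap_right (p q r : V) : hessian T p q r = hessian T p r q := by
  simp only [hessian_apply]; ring

lemma hessian_rotate (p q r : V) : hessian T p q r = hessian T r p q := by
  simp only [hessian_apply]; ring

lemma hessian_self_mid (p q : V) : hessian T p q p = 2 * polar T p q := by
  simp only [hessian_apply, polar_apply]; ring

lemma hessian_self_right (p q : V) : hessian T p q q = 2 * polar T q p := by
  simp only [hessian_apply, polar_apply]; ring

/-- The cubic surface `cubic T = 0` is smooth: no nonzero vector is a zero of the form and of its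
differential. -/
def Smooth : Prop := ∀ p : V, cubic T p = 0 → polar T p = 0 → p = 0

/-- A line on the surface `cubic T = 0`, as a two-dimensional space of vectors. -/
def IsLine (L : Submodule k V) : Prop := Module.finrank k L = 2 ∧ ∀ x ∈ L, cubic T x = 0

end Polarization

section Line

variable {k V : Type*} [Field k] [AddCommGroup V] [Module k V] {T : TrilinearForm k V}
  {L M : Submodule k V}

lemma IsLine.finiteDimensional (hL : IsLine T L) : FiniteDimensional k L :=
  Module.finite_of_finrank_pos (hL.1 ▸ two_pos)

lemma IsLine.eq_of_le (hL : IsLine T L) (hM : IsLine T M) (h : L ≤ M) : L = M :=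
  have := hM.finiteDimensional
  Submodule.eq_of_le_of_finrank_eq h (hL.1.trans hM.1.symm)

lemma eq_zero_of_forall_mul_add_sq_mul [Infinite k] {a b : k}
    (h : ∀ t : k, t * a + t ^ 2 * b = 0) : a = 0 := by
  obtain ⟨r, hr⟩ := (Set.toFinite {0, (1 : k)}).exists_notMem
  simp only [Set.mem_insert_iff, Set.mem_singleton_iff, not_or] at hr
  have hmul : r * ((r - 1) * a) = 0 := by linear_combination r ^ 2 * h 1 - h r
  simpa [hr.1, sub_eq_zero, hr.2] using hmul

lemma IsLine.polar_eq_zero [Infinite k] (hL : IsLine T L) {x y : V} (hx : x ∈ L) (hy : y ∈ L) :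
    polar T x y = 0 := by
  have hsum (t : k) : t * polar T x y + t ^ 2 * polar T y x = 0 := by
    have h := hL.2 (x + t • y) (L.add_mem hx (L.smul_mem t hy))
    rw [cubic_add, hL.2 x hx, cubic_smul, hL.2 y hy, polar_smul_left, map_smul, smul_eq_mul] at h
    linear_combination h
  exact eq_zero_of_forall_mul_add_sq_mul hsum

end Line

section BinaryQuadratic

variable {k : Type*} [Field k] [IsAlgClosed k]

lemma exists_isotropic_binaryQuadratic (a b c : k) :
    ∃ x y : k, (x ≠ 0 ∨ y ≠ 0) ∧ a * x ^ 2 + b * x * y + c * y ^ 2 = 0 := by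
  by_cases ha : a = 0
  · exact ⟨1, 0, Or.inl one_ne_zero, by simp [ha]⟩
  · obtain ⟨x, hx⟩ := IsAlgClosed.exists_root
      (Polynomial.C a * Polynomial.X ^ 2 + Polynomial.C b * Polynomial.X + Polynomial.C c)
      (by rw [Polynomial.degree_quadratic ha]; exact two_ne_zero)
    refine ⟨x, 1, Or.inr one_ne_zero, ?_⟩
    simp only [Polynomial.IsRoot, Polynomial.eval_add, Polynomial.eval_mul, Polynomial.eval_C,
      Polynomial.eval_pow, Polynomial.eval_X] at hx
    linear_combination hx

lemma exists_add_eq_mul_eq (b c : k) : ∃ x y : k, x + y = b ∧ x * y = c := by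
  obtain ⟨x, y, hxy, h⟩ := exists_isotropic_binaryQuadratic 1 (-b) c
  have hy : y ≠ 0 := fun hy => by simp_all
  refine ⟨x / y, b - x / y, by ring, ?_⟩
  field_simp
  linear_combination -h

end BinaryQuadratic

/-- Ternary quadratic forms `xx X² + xy XY + yy Y² + xz XZ + yz YZ + zz Z²`, given by their
coefficients so that the characteristic two case is included. -/
@[ext]
structure TernaryQuadratic (R : Type*) where
  xx : R
  xy : R
  yy : R
  xz : R
  yz : R
  zz : R

namespace TernaryQuadratic

section CommRing

variable {R S : Type*} [CommRing R] [CommRing S]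

/-- The value of a ternary quadratic form at a vector. -/
def eval (q : TernaryQuadratic R) (p : Fin 3 → R) : R :=
  q.xx * p 0 ^ 2 + q.xy * p 0 * p 1 + q.yy * p 1 ^ 2 + q.xz * p 0 * p 2 + q.yz * p 1 * p 2
    + q.zz * p 2 ^ 2

/-- The bilinear form `q (p + w) - q p - q w` associated with `q`. -/
def polar (q : TernaryQuadratic R) (p w : Fin 3 → R) : R :=
  2 * q.xx * p 0 * w 0 + q.xy * (p 0 * w 1 + p 1 * w 0) + 2 * q.yy * p 1 * w 1
    + q.xz * (p 0 * w 2 + p 2 * w 0) + q.yz * (p 1 * w 2 + p 2 * w 1) + 2 * q.zz * p 2 * w 2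

/-- The half discriminant: half the determinant of the Gram matrix, an integral polynomial in the
coefficients which detects singular conics in every characteristic. -/
def disc (q : TernaryQuadratic R) : R :=
  4 * q.xx * q.yy * q.zz + q.xy * q.xz * q.yz - q.xx * q.yz ^ 2 - q.yy * q.xz ^ 2
    - q.zz * q.xy ^ 2

/-- The derivative of `disc` at `q` in the direction `q'`. -/
def discDeriv (q q' : TernaryQuadratic R) : R :=
  4 * (q'.xx * q.yy * q.zz + q.xx * q'.yy * q.zz + q.xx * q.yy * q'.zz)
    + q'.xy * q.xz * q.yz + q.xy * q'.xz * q.yz + q.xy * q.xz * q'.yz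
    - q'.xx * q.yz ^ 2 - 2 * q.xx * q.yz * q'.yz
    - q'.yy * q.xz ^ 2 - 2 * q.yy * q.xz * q'.xz
    - q'.zz * q.xy ^ 2 - 2 * q.zz * q.xy * q'.xy

/-- Apply a function to each coefficient. -/
def map (φ : R → S) (q : TernaryQuadratic R) : TernaryQuadratic S :=
  ⟨φ q.xx, φ q.xy, φ q.yy, φ q.xz, φ q.yz, φ q.zz⟩

/-- The product of two linear forms, each given by its vector of coefficients. -/
def linearMul (ℓ ℓ' : Fin 3 → R) : TernaryQuadratic R :=
  ⟨ℓ 0 * ℓ' 0, ℓ 0 * ℓ' 1 + ℓ 1 * ℓ' 0, ℓ 1 * ℓ' 1, ℓ 0 * ℓ' 2 + ℓ 2 * ℓ' 0,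
    ℓ 1 * ℓ' 2 + ℓ 2 * ℓ' 1, ℓ 2 * ℓ' 2⟩

lemma eval_smul_add_smul (q : TernaryQuadratic R) (a b : R) (u v : Fin 3 → R) :
    q.eval (a • u + b • v) = q.eval u * a ^ 2 + q.polar u v * a * b + q.eval v * b ^ 2 := by
  simp only [eval, polar, Pi.add_apply, Pi.smul_apply, smul_eq_mul]; ring

lemma eval_linearMul (ℓ ℓ' p : Fin 3 → R) : (linearMul ℓ ℓ').eval p = (ℓ ⬝ᵥ p) * (ℓ' ⬝ᵥ p) := by
  simp only [eval, linearMul, dotProduct, Fin.sum_univ_three]; ring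

lemma polar_linearMul (ℓ ℓ' p w : Fin 3 → R) :
    (linearMul ℓ ℓ').polar p w = (ℓ ⬝ᵥ p) * (ℓ' ⬝ᵥ w) + (ℓ ⬝ᵥ w) * (ℓ' ⬝ᵥ p) := by
  simp only [polar, linearMul, dotProduct, Fin.sum_univ_three]; ring

lemma polar_comm (q : TernaryQuadratic R) (p w : Fin 3 → R) : q.polar p w = q.polar w p := by
  simp only [polar]; ring

lemma linearMul_comm (ℓ ℓ' : Fin 3 → R) : linearMul ℓ ℓ' = linearMul ℓ' ℓ := by
  simp only [linearMul, mul_comm, add_comm]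

lemma disc_map (φ : R →+* S) (q : TernaryQuadratic R) : (q.map φ).disc = φ q.disc := by
  simp only [disc, map, map_add, map_sub, map_mul, map_pow, map_ofNat]

lemma derivative_disc (q : TernaryQuadratic (Polynomial R)) :
    Polynomial.derivative q.disc = q.discDeriv (q.map Polynomial.derivative) := by
  simp only [disc, discDeriv, map, sq, Polynomial.derivative_mul, Polynomial.derivative_add,
    Polynomial.derivative_sub, Polynomial.derivative_ofNat]
  ring

lemma disc_baseChange (q : TernaryQuadratic R) (u v w : Fin 3 → R) :
    disc ⟨q.eval u, q.polar u v, q.eval v, q.polar u w, q.polar v w, q.eval w⟩ =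
      (crossProduct u v ⬝ᵥ w) ^ 2 * q.disc := by
  simp only [disc, eval, polar, cross_apply, dotProduct, Fin.sum_univ_three, Matrix.cons_val]; ring

lemma discDeriv_map (φ : R →+* S) (q q' : TernaryQuadratic R) :
    (q.map φ).discDeriv (q'.map φ) = φ (q.discDeriv q') := by
  simp only [discDeriv, map, map_add, map_sub, map_mul, map_pow, map_ofNat]

-- The differential of `disc` at a pair of lines is evaluation at their intersection point.
lemma discDeriv_linearMul (ℓ ℓ' : Fin 3 → R) (q' : TernaryQuadratic R) :
    (linearMul ℓ ℓ').discDeriv q' = -q'.eval (crossProduct ℓ ℓ') := by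
  simp only [discDeriv, linearMul, eval, cross_apply, Matrix.cons_val]; ring

end CommRing

section Field

variable {k : Type*} [Field k]

lemma disc_eq_zero_of_isotropic {q : TernaryQuadratic k} {u v : Fin 3 → k}
    (huv : LinearIndependent k ![u, v]) (hu : q.eval u = 0) (hv : q.eval v = 0)
    (h : q.polar u v = 0) : q.disc = 0 := by
  obtain ⟨i, hi⟩ := Function.ne_iff.1 (crossProduct_ne_zero_iff_linearIndependent.2 huv)
  have hdisc := disc_baseChange q u v (Pi.single i 1)
  rw [hu, hv, h, dotProduct_single_one] at hdisc
  simpa [disc, pow_eq_zero_iff, show crossProduct u v i ≠ 0 from hi] using hdisc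

variable [IsAlgClosed k]

lemma exists_dotProduct_eq_zero_and_eval_eq_zero (ℓ : Fin 3 → k) (q : TernaryQuadratic k) :
    ∃ p ≠ 0, ℓ ⬝ᵥ p = 0 ∧ q.eval p = 0 := by
  let φ : (Fin 3 → k) →ₗ[k] k := dotProductBilin k k ℓ
  have hφ : 1 < Module.finrank k (LinearMap.ker φ) := by
    have h := φ.finrank_range_add_finrank_ker
    have hr := (LinearMap.range φ).finrank_le
    rw [Module.finrank_fin_fun] at h
    rw [Module.finrank_self] at hr
    omega
  have : Nontrivial (LinearMap.ker φ) :=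
    Module.nontrivial_of_finrank_pos (zero_lt_one.trans hφ)
  obtain ⟨u, hu⟩ := exists_ne (0 : LinearMap.ker φ)
  obtain ⟨v, huv⟩ := exists_linearIndependent_pair_of_one_lt_finrank hφ hu
  obtain ⟨a, b, hab, hq⟩ :=
    exists_isotropic_binaryQuadratic (q.eval u) (q.polar u v) (q.eval v)
  refine ⟨a • u + b • v, fun h0 => ?_, (a • u + b • v).2, ?_⟩
  · obtain ⟨rfl, rfl⟩ := LinearIndependent.pair_iff.1 huv a b (Subtype.ext h0)
    simp at hab
  · rw [eval_smul_add_smul, hq]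

lemma exists_eq_linearMul_of_xx_ne_zero {q : TernaryQuadratic k} (hq : q.xx ≠ 0) (h : q.disc = 0) :
    ∃ ℓ ℓ', q = linearMul ℓ ℓ' := by
  obtain ⟨A, B, C, D, E, G⟩ := q
  dsimp only at hq
  obtain ⟨β, β', hB, hC⟩ := exists_add_eq_mul_eq (B / A) (C / A)
  obtain ⟨γ, γ', hD, hG⟩ := exists_add_eq_mul_eq (D / A) (G / A)
  rw [eq_div_iff hq] at hB hC hD hG
  subst hB hC hD hG
  have hprod : A * ((E - A * (β * γ' + γ * β')) * (E - A * (β * γ + γ' * β'))) = 0 := by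
    rw [disc] at h
    linear_combination -h
  rcases mul_eq_zero.1 ((mul_eq_zero.1 hprod).resolve_left hq) with hE | hE
  · refine ⟨![A, A * β, A * γ], ![1, β', γ'], ?_⟩
    rw [sub_eq_zero.1 hE]
    ext <;> simp only [linearMul, Matrix.cons_val] <;> ring
  · refine ⟨![A, A * β, A * γ'], ![1, β', γ], ?_⟩
    rw [sub_eq_zero.1 hE]
    ext <;> simp only [linearMul, Matrix.cons_val] <;> ring

theorem exists_eq_linearMul_of_disc_eq_zero {q : TernaryQuadratic k} (h : q.disc = 0) :
    ∃ ℓ ℓ', q = linearMul ℓ ℓ' := by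
  by_cases hx : q.xx = 0
  · by_cases hy : q.yy = 0
    · by_cases hz : q.zz = 0
      · have hprod : q.xy * q.xz * q.yz = 0 := by
          simpa [disc, hx, hy, hz] using h
        rcases mul_eq_zero.1 hprod with hprod | hyz
        · rcases mul_eq_zero.1 hprod with hxy | hxz
          · exact ⟨![0, 0, 1], ![q.xz, q.yz, 0], by ext <;> simp [linearMul, *]⟩
          · exact ⟨![0, 1, 0], ![q.xy, 0, q.yz], by ext <;> simp [linearMul, *]⟩
        · exact ⟨![1, 0, 0], ![0, q.xy, q.xz], by ext <;> simp [linearMul, *]⟩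
      · obtain ⟨ℓ, ℓ', hq⟩ := exists_eq_linearMul_of_xx_ne_zero
          (q := ⟨q.zz, q.yz, q.yy, q.xz, q.xy, q.xx⟩) hz (by rw [disc] at h ⊢; linear_combination h)
        simp only [linearMul, mk.injEq] at hq
        refine ⟨![ℓ 2, ℓ 1, ℓ 0], ![ℓ' 2, ℓ' 1, ℓ' 0], ?_⟩
        ext <;> simp only [linearMul, Matrix.cons_val, hq, add_comm]
    · obtain ⟨ℓ, ℓ', hq⟩ := exists_eq_linearMul_of_xx_ne_zero
        (q := ⟨q.yy, q.xy, q.xx, q.yz, q.xz, q.zz⟩) hy (by rw [disc] at h ⊢; linear_combination h)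
      simp only [linearMul, mk.injEq] at hq
      refine ⟨![ℓ 1, ℓ 0, ℓ 2], ![ℓ' 1, ℓ' 0, ℓ' 2], ?_⟩
      ext <;> simp only [linearMul, Matrix.cons_val, hq, add_comm]
  · exact exists_eq_linearMul_of_xx_ne_zero hx h

end Field

end TernaryQuadratic

section Transverse

variable {k V : Type*} [Field k] [AddCommGroup V] [Module k V] {T : TrilinearForm k V}
  {L : Submodule k V} {z₀ z₁ : V}

/-- The classes of `z₀` and `z₁` form a basis of `V ⧸ L`, so that for a line `L` in projective
3-space the planes `L ⊔ span {z₀ + t • z₁}` and `L ⊔ span {z₁}` form the pencil of planes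
through `L`. -/
structure IsTransverse (L : Submodule k V) (z₀ z₁ : V) : Prop where
  indep : ∀ s t : k, s • z₀ + t • z₁ ∈ L → s = 0 ∧ t = 0
  exists_eq : ∀ x : V, ∃ l ∈ L, ∃ s t : k, x = l + s • z₀ + t • z₁

lemma exists_isTransverse (h : Module.finrank k (V ⧸ L) = 2) : ∃ z₀ z₁, IsTransverse L z₀ z₁ := by
  have := Module.finite_of_finrank_eq_succ h
  let e := Module.finBasisOfFinrankEq k (V ⧸ L) h
  obtain ⟨z₀, hz₀⟩ := L.mkQ_surjective (e 0)
  obtain ⟨z₁, hz₁⟩ := L.mkQ_surjective (e 1)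
  have hmk (s t : k) : L.mkQ (s • z₀ + t • z₁) = s • e 0 + t • e 1 := by
    rw [map_add, map_smul, map_smul, hz₀, hz₁]
  refine ⟨z₀, z₁, fun s t hst => ?_, fun x => ?_⟩
  · rw [← L.ker_mkQ, LinearMap.mem_ker, hmk] at hst
    have he := Fintype.linearIndependent_iff.1 e.linearIndependent ![s, t]
      (by simpa [Fin.sum_univ_two] using hst)
    exact ⟨he 0, he 1⟩
  · refine ⟨x - (e.repr (L.mkQ x) 0 • z₀ + e.repr (L.mkQ x) 1 • z₁), ?_,
      e.repr (L.mkQ x) 0, e.repr (L.mkQ x) 1, by abel⟩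
    have hsum := e.sum_repr (L.mkQ x)
    rw [Fin.sum_univ_two] at hsum
    refine (Submodule.Quotient.mk_eq_zero L).1 ?_
    rw [← L.mkQ_apply, map_sub, hmk, hsum, sub_self]

namespace IsTransverse

lemma shift (h : IsTransverse L z₀ z₁) (t : k) : IsTransverse L (z₀ + t • z₁) z₁ := by
  refine ⟨fun s r hr => ?_, fun x => ?_⟩
  · obtain ⟨rfl, ht⟩ := h.indep s (s * t + r) (by convert hr using 1; module)
    exact ⟨rfl, by simpa using ht⟩
  · obtain ⟨l, hl, s, r, rfl⟩ := h.exists_eq x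
    exact ⟨l, hl, s, r - s * t, by module⟩

lemma swap (h : IsTransverse L z₀ z₁) : IsTransverse L z₁ z₀ := by
  refine ⟨fun s t hst => (h.indep t s (by rwa [add_comm])).symm, fun x => ?_⟩
  obtain ⟨l, hl, s, t, rfl⟩ := h.exists_eq x
  exact ⟨l, hl, t, s, by abel⟩

lemma left_notMem (h : IsTransverse L z₀ z₁) : z₀ ∉ L := fun hz =>
  one_ne_zero (h.indep 1 0 (by simpa using hz)).1

lemma eq_zero_of_singular (h : IsTransverse L z₀ z₁) (hT : Smooth T) {x : V} (hx : cubic T x = 0)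
    (hL : ∀ l ∈ L, polar T x l = 0) (h₀ : polar T x z₀ = 0) (h₁ : polar T x z₁ = 0) : x = 0 := by
  refine hT x hx (LinearMap.ext fun w => ?_)
  obtain ⟨l, hl, s, t, rfl⟩ := h.exists_eq w
  simp [hL l hl, h₀, h₁]

end IsTransverse

end Transverse

section ResidualConic

variable {k V : Type*} [Field k] [AddCommGroup V] [Module k V] {T : TrilinearForm k V}
  {L : Submodule k V}

/-- The parametrization `p ↦ p₀ b₀ + p₁ b₁ + p₂ z` of the plane spanned by `L` and `z`, in which
`L` is the line `p₂ = 0`. -/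
noncomputable def planeMap (b : Module.Basis (Fin 2) k L) (z : V) : (Fin 3 → k) →ₗ[k] V :=
  Fintype.linearCombination k ![(b 0 : V), (b 1 : V), z]

/-- For a line `L` on the surface, the conic which together with `L` makes up the section by the
plane spanned by `L` and `z`, in the coordinates of `planeMap`. -/
noncomputable def residualConic (T : TrilinearForm k V) (b : Module.Basis (Fin 2) k L) (z : V) :
    TernaryQuadratic k :=
  ⟨polar T (b 0) z, hessian T (b 0) (b 1) z, polar T (b 1) z, polar T z (b 0), polar T z (b 1),
    cubic T z⟩

/-- The restriction of the quadratic form `polar T · w` to the plane spanned by `L` and `z`, in the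
coordinates of `planeMap`. -/
noncomputable def polarConic (T : TrilinearForm k V) (b : Module.Basis (Fin 2) k L) (z w : V) :
    TernaryQuadratic k :=
  ⟨polar T (b 0) w, hessian T (b 0) (b 1) w, polar T (b 1) w, hessian T (b 0) z w,
    hessian T (b 1) z w, polar T z w⟩

variable (b : Module.Basis (Fin 2) k L) (z : V) (p : Fin 3 → k)

lemma planeMap_apply : planeMap b z p = p 0 • (b 0 : V) + p 1 • (b 1 : V) + p 2 • z := by
  simp [planeMap, Fintype.linearCombination_apply, Fin.sum_univ_three]

variable {z} in
lemma planeMap_injective (hz : z ∉ L) : Function.Injective (planeMap b z) := by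
  refine (injective_iff_map_eq_zero _).2 fun p hp => ?_
  rw [planeMap_apply] at hp
  have hp₂ : p 2 = 0 := by
    by_contra hne
    refine hz ((L.smul_mem_iff hne).1 ?_)
    rw [← neg_eq_of_add_eq_zero_right hp]
    exact L.neg_mem (L.add_mem (L.smul_mem _ (b 0).2) (L.smul_mem _ (b 1).2))
  have hb := Fintype.linearIndependent_iff.1 b.linearIndependent ![p 0, p 1]
    (Subtype.ext (by simpa [Fin.sum_univ_two, hp₂] using hp))
  exact funext fun i => by fin_cases i; exacts [hb 0, hb 1, hp₂]

lemma exists_eq_planeMap {x : V} (hx : x ∈ L ⊔ Submodule.span k {z}) :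
    ∃ p, x = planeMap b z p := by
  obtain ⟨l, hl, _, hz, rfl⟩ := Submodule.mem_sup.1 hx
  obtain ⟨s, rfl⟩ := Submodule.mem_span_singleton.1 hz
  have hl' := congrArg Subtype.val (b.sum_repr ⟨l, hl⟩)
  rw [Fin.sum_univ_two] at hl'
  exact ⟨![b.repr ⟨l, hl⟩ 0, b.repr ⟨l, hl⟩ 1, s], by rw [planeMap_apply]; simpa using hl'.symm⟩

lemma planeMap_mem : planeMap b z p ∈ L ⊔ Submodule.span k {z} := by
  rw [planeMap_apply]
  exact Submodule.add_mem_sup (L.add_mem (L.smul_mem _ (b 0).2) (L.smul_mem _ (b 1).2))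
    (Submodule.smul_mem _ _ (Submodule.mem_span_singleton_self z))

lemma planeMap_mem_of_eq_zero (hp : p 2 = 0) : planeMap b z p ∈ L := by
  rw [planeMap_apply, hp, zero_smul, add_zero]
  exact L.add_mem (L.smul_mem _ (b 0).2) (L.smul_mem _ (b 1).2)

lemma eval_polarConic (w : V) : (polarConic T b z w).eval p = polar T (planeMap b z p) w := by
  simp only [planeMap_apply, TernaryQuadratic.eval, polarConic, polar_add_left, polar_smul_left,
    map_add, map_smul, LinearMap.add_apply, LinearMap.smul_apply, smul_eq_mul]
  ring

lemma IsLine.cubic_planeMap (hL : IsLine T L) :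
    cubic T (planeMap b z p) = p 2 * (residualConic T b z).eval p := by
  have hl : p 0 • (b 0 : V) + p 1 • (b 1 : V) ∈ L :=
    L.add_mem (L.smul_mem _ (b 0).2) (L.smul_mem _ (b 1).2)
  rw [planeMap_apply, cubic_add, hL.2 _ hl]
  simp only [TernaryQuadratic.eval, residualConic, polar_add_left, polar_smul_left, cubic_smul,
    map_add, map_smul, LinearMap.smul_apply, smul_eq_mul]
  ring

lemma IsLine.polar_planeMap [Infinite k] (hL : IsLine T L) (w : Fin 3 → k) :
    polar T (planeMap b z p) (planeMap b z w) =
      w 2 * (residualConic T b z).eval p + p 2 * (residualConic T b z).polar p w := by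
  have h (i j : Fin 2) : polar T (b i) (b j) = 0 := hL.polar_eq_zero (b i).2 (b j).2
  rw [← eval_polarConic, planeMap_apply]
  simp only [TernaryQuadratic.eval, TernaryQuadratic.polar, residualConic, polarConic, map_add,
    map_smul, smul_eq_mul, h, hessian_self_mid, hessian_self_right, polar_self]
  rw [hessian_swap_right T (b 0) z (b 1), hessian_swap_right T (b 1) z (b 0),
    hessian_swap_left T (b 1) (b 0) z]
  ring

end ResidualConic

section PencilConic

variable {k V : Type*} [Field k] [AddCommGroup V] [Module k V] {L : Submodule k V}

open TernaryQuadratic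

/-- The residual conic of the plane `L ⊔ span {z₀ + t • z₁}`, as a conic over the polynomial ring in
the parameter `t` of the pencil. -/
noncomputable def pencilConic (T : TrilinearForm k V) (b : Module.Basis (Fin 2) k L) (z₀ z₁ : V) :
    TernaryQuadratic (Polynomial k) where
  xx := .C (polar T (b 0) z₀) + .C (polar T (b 0) z₁) * .X
  xy := .C (hessian T (b 0) (b 1) z₀) + .C (hessian T (b 0) (b 1) z₁) * .X
  yy := .C (polar T (b 1) z₀) + .C (polar T (b 1) z₁) * .X
  xz := .C (polar T z₀ (b 0)) + .C (hessian T (b 0) z₀ z₁) * .X + .C (polar T z₁ (b 0)) * .X ^ 2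
  yz := .C (polar T z₀ (b 1)) + .C (hessian T (b 1) z₀ z₁) * .X + .C (polar T z₁ (b 1)) * .X ^ 2
  zz := .C (cubic T z₀) + .C (polar T z₀ z₁) * .X + .C (polar T z₁ z₀) * .X ^ 2
    + .C (cubic T z₁) * .X ^ 3

variable (T : TrilinearForm k V) (b : Module.Basis (Fin 2) k L) (z₀ z₁ : V)

lemma map_eval_pencilConic (t : k) :
    (pencilConic T b z₀ z₁).map (Polynomial.evalRingHom t) = residualConic T b (z₀ + t • z₁) := by
  ext <;> simp only [pencilConic, residualConic, TernaryQuadratic.map, Polynomial.coe_evalRingHom,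
    Polynomial.eval_mul, Polynomial.eval_pow, Polynomial.eval_C,
    Polynomial.eval_X, map_add, map_smul, polar_add_left, polar_smul_left, cubic_add, cubic_smul,
    hessian_rotate T z₀, LinearMap.smul_apply, smul_eq_mul] <;> ring

lemma map_eval_derivative_pencilConic (t : k) :
    ((pencilConic T b z₀ z₁).map Polynomial.derivative).map (Polynomial.evalRingHom t) =
      polarConic T b (z₀ + t • z₁) z₁ := by
  ext <;> simp [pencilConic, polarConic, TernaryQuadratic.map, polar_add_left, polar_smul_left,
    polar_self, hessian_self_right] <;> ring

lemma eval_disc_pencilConic (t : k) :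
    (pencilConic T b z₀ z₁).disc.eval t = (residualConic T b (z₀ + t • z₁)).disc := by
  rw [← map_eval_pencilConic, disc_map, Polynomial.coe_evalRingHom]

lemma eval_derivative_disc_pencilConic (t : k) :
    (Polynomial.derivative (pencilConic T b z₀ z₁).disc).eval t =
      (residualConic T b (z₀ + t • z₁)).discDeriv (polarConic T b (z₀ + t • z₁) z₁) := by
  rw [← map_eval_derivative_pencilConic, ← map_eval_pencilConic, discDeriv_map, derivative_disc,
    Polynomial.coe_evalRingHom]

lemma natDegree_disc_pencilConic_le : (pencilConic T b z₀ z₁).disc.natDegree ≤ 5 := by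
  simp only [pencilConic, disc]
  compute_degree

lemma coeff_five_disc_pencilConic :
    (pencilConic T b z₀ z₁).disc.coeff 5 = (residualConic T b z₁).disc := by
  simp only [pencilConic, residualConic, disc]
  compute_degree
  all_goals simp

end PencilConic

section Pencil

variable {k V : Type*} [Field k] [IsAlgClosed k] [AddCommGroup V] [Module k V]
  {T : TrilinearForm k V} {L : Submodule k V} {z₀ z₁ : V}

open TernaryQuadratic

lemma IsTransverse.eq_zero_of_singular_planeMap (h : IsTransverse L z₀ z₁) (hT : Smooth T)
    (hL : IsLine T L) (b : Module.Basis (Fin 2) k L) {p : Fin 3 → k}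
    (hp : (residualConic T b z₀).eval p = 0)
    (hpolar : ∀ w, p 2 * (residualConic T b z₀).polar p w = 0)
    (h₁ : polar T (planeMap b z₀ p) z₁ = 0) : p = 0 := by
  have hplane {x : V} (hx : x ∈ L ⊔ Submodule.span k {z₀}) :
      polar T (planeMap b z₀ p) x = 0 := by
    obtain ⟨w, rfl⟩ := exists_eq_planeMap b z₀ hx
    rw [hL.polar_planeMap, hp, hpolar, mul_zero, add_zero]
  refine planeMap_injective b h.left_notMem ?_
  rw [map_zero]
  refine h.eq_zero_of_singular hT (by rw [hL.cubic_planeMap, hp, mul_zero])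
    (fun l hl => hplane (Submodule.mem_sup_left hl)) (hplane ?_) h₁
  exact Submodule.mem_sup_right (Submodule.mem_span_singleton_self z₀)

-- Otherwise the quadratic form `polar T · z₁` has a zero on `m`, which is a singular point.
lemma Smooth.exists_ne_zero_of_dotProduct_eq_zero (hT : Smooth T) (hL : IsLine T L)
    (h : IsTransverse L z₀ z₁) (b : Module.Basis (Fin 2) k L) (m : Fin 3 → k) :
    ∃ p, m ⬝ᵥ p = 0 ∧ ((residualConic T b z₀).eval p = 0 →
      ∃ w, p 2 * (residualConic T b z₀).polar p w ≠ 0) := by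
  obtain ⟨p, hp, hmp, hpol⟩ :=
    exists_dotProduct_eq_zero_and_eval_eq_zero m (polarConic T b z₀ z₁)
  rw [eval_polarConic] at hpol
  refine ⟨p, hmp, fun hq => ?_⟩
  by_contra! hw
  exact hp (h.eq_zero_of_singular_planeMap hT hL b hq hw hpol)

lemma Smooth.coord_ne_zero_of_residualConic_eq_linearMul (hT : Smooth T) (hL : IsLine T L)
    (h : IsTransverse L z₀ z₁) {b : Module.Basis (Fin 2) k L} {ℓ ℓ' : Fin 3 → k}
    (hq : residualConic T b z₀ = linearMul ℓ ℓ') : ℓ 0 ≠ 0 ∨ ℓ 1 ≠ 0 := by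
  by_contra! hℓ
  obtain ⟨p, hp, hsing⟩ := hT.exists_ne_zero_of_dotProduct_eq_zero hL h b ![0, 0, 1]
  have hp₂ : p 2 = 0 := by simpa [dotProduct, Fin.sum_univ_three] using hp
  have hℓp : ℓ ⬝ᵥ p = 0 := by simp [dotProduct, Fin.sum_univ_three, hℓ, hp₂]
  obtain ⟨w, hw⟩ := hsing (by rw [hq, eval_linearMul, hℓp, zero_mul])
  exact hw (by rw [hp₂, zero_mul])

lemma Smooth.linearIndependent_of_residualConic_eq_linearMul (hT : Smooth T) (hL : IsLine T L)
    (h : IsTransverse L z₀ z₁) {b : Module.Basis (Fin 2) k L} {ℓ ℓ' : Fin 3 → k}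
    (hq : residualConic T b z₀ = linearMul ℓ ℓ') : LinearIndependent k ![ℓ, ℓ'] := by
  have hline (m : Fin 3 → k) : ¬ ∀ p, m ⬝ᵥ p = 0 → ℓ ⬝ᵥ p = 0 ∧ ℓ' ⬝ᵥ p = 0 := fun hm => by
    obtain ⟨p, hp, hsing⟩ := hT.exists_ne_zero_of_dotProduct_eq_zero hL h b m
    obtain ⟨hℓ, hℓ'⟩ := hm p hp
    obtain ⟨w, hw⟩ := hsing (by rw [hq, eval_linearMul, hℓ, zero_mul])
    exact hw (by rw [hq, polar_linearMul, hℓ, hℓ', zero_mul, mul_zero, add_zero, mul_zero])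
  refine LinearIndependent.pair_iff.2 fun s t hst => ?_
  have hdot (p : Fin 3 → k) : s * (ℓ ⬝ᵥ p) + t * (ℓ' ⬝ᵥ p) = 0 := by
    simpa [add_dotProduct, smul_dotProduct] using congrArg (· ⬝ᵥ p) hst
  by_contra! hne
  by_cases hs : s = 0
  · exact hline ℓ fun p hp => ⟨hp, by simpa [hp, hne hs] using hdot p⟩
  · exact hline ℓ' fun p hp => ⟨by simpa [hp, hs] using hdot p, hp⟩

lemma Smooth.discDeriv_residualConic_ne_zero (hT : Smooth T) (hL : IsLine T L)
    (h : IsTransverse L z₀ z₁) {b : Module.Basis (Fin 2) k L}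
    (hdisc : (residualConic T b z₀).disc = 0) :
    (residualConic T b z₀).discDeriv (polarConic T b z₀ z₁) ≠ 0 := by
  obtain ⟨ℓ, ℓ', hq⟩ := exists_eq_linearMul_of_disc_eq_zero hdisc
  have hcross := crossProduct_ne_zero_iff_linearIndependent.2
    (hT.linearIndependent_of_residualConic_eq_linearMul hL h hq)
  rw [hq, discDeriv_linearMul, neg_ne_zero, eval_polarConic]
  refine fun hpol => hcross (h.eq_zero_of_singular_planeMap hT hL b ?_ (fun w => ?_) hpol)
  · rw [hq, eval_linearMul, dot_self_cross, zero_mul]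
  · rw [hq, polar_linearMul, dot_self_cross, dot_cross_self, zero_mul, mul_zero, add_zero, mul_zero]

variable (b : Module.Basis (Fin 2) k L)

lemma Smooth.separable_disc_pencilConic (hT : Smooth T) (hL : IsLine T L)
    (h : IsTransverse L z₀ z₁) : (pencilConic T b z₀ z₁).disc.Separable := by
  refine (Polynomial.isCoprime_iff_aeval_ne_zero_of_isAlgClosed k k _ _).2 fun t => ?_
  simp only [Polynomial.coe_aeval_eq_eval, eval_disc_pencilConic, eval_derivative_disc_pencilConic]
  exact or_iff_not_imp_left.2 fun ht =>
    hT.discDeriv_residualConic_ne_zero hL (h.shift t) (not_not.1 ht)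

lemma Smooth.exists_isTransverse_disc_ne_zero (hT : Smooth T) (hL : IsLine T L)
    (hV : Module.finrank k (V ⧸ L) = 2) :
    ∃ z₀ z₁, IsTransverse L z₀ z₁ ∧ (residualConic T b z₁).disc ≠ 0 := by
  obtain ⟨z₀, z₁, h⟩ := exists_isTransverse hV
  have hP := (hT.separable_disc_pencilConic b hL h).ne_zero
  obtain ⟨t, ht⟩ : ∃ t, (pencilConic T b z₀ z₁).disc.eval t ≠ 0 := by
    by_contra! ht
    exact hP (Polynomial.zero_of_eval_zero _ ht)
  exact ⟨z₁, z₀ + t • z₁, (h.shift t).swap, by rwa [← eval_disc_pencilConic]⟩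

lemma Smooth.exists_injective_forall_disc_eq_zero_iff (hT : Smooth T) (hL : IsLine T L)
    (h : IsTransverse L z₀ z₁) (h₁ : (residualConic T b z₁).disc ≠ 0) :
    ∃ t : Fin 5 → k, Function.Injective t ∧
      ∀ s, (residualConic T b (z₀ + s • z₁)).disc = 0 ↔ s ∈ Set.range t := by
  set P := (pencilConic T b z₀ z₁).disc
  have hsep : P.Separable := hT.separable_disc_pencilConic b hL h
  have hdeg : P.natDegree = 5 := (natDegree_disc_pencilConic_le T b z₀ z₁).antisymm
    (Polynomial.le_natDegree_of_ne_zero (by rwa [coeff_five_disc_pencilConic]))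
  have hcard : Fintype.card (P.rootSet k) = 5 := by
    rw [Polynomial.card_rootSet_eq_natDegree hsep (IsAlgClosed.splits _), hdeg]
  let e := (Fintype.equivFinOfCardEq hcard).symm
  refine ⟨Subtype.val ∘ e, Subtype.val_injective.comp e.injective, fun s => ?_⟩
  rw [← eval_disc_pencilConic, e.surjective.range_comp Subtype.val, Subtype.range_coe,
    Polynomial.mem_rootSet_of_ne hsep.ne_zero, Polynomial.coe_aeval_eq_eval]

end Pencil

section PlaneLine

variable {k V : Type*} [Field k] [AddCommGroup V] [Module k V] {L : Submodule k V}

/-- The line `ℓ₀ p₀ + ℓ₁ p₁ + ℓ₂ p₂ = 0` of the plane spanned by `L` and `z`, in the coordinates of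
`planeMap`. -/
noncomputable def planeLine (b : Module.Basis (Fin 2) k L) (z : V) (ℓ : Fin 3 → k) :
    Submodule k V :=
  (LinearMap.ker (dotProductBilin k k ℓ : (Fin 3 → k) →ₗ[k] k)).map (planeMap b z)

variable (b : Module.Basis (Fin 2) k L) (z : V) {ℓ ℓ' : Fin 3 → k}

lemma planeLine_le : planeLine b z ℓ ≤ L ⊔ Submodule.span k {z} := by
  rintro _ ⟨p, -, rfl⟩
  exact planeMap_mem b z p

variable {z}

lemma planeMap_mem_planeLine (hz : z ∉ L) {p : Fin 3 → k} :
    planeMap b z p ∈ planeLine b z ℓ ↔ ℓ ⬝ᵥ p = 0 :=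
  (planeMap_injective b hz).mem_set_image

lemma finrank_planeLine (hz : z ∉ L) (hℓ : ℓ ≠ 0) : Module.finrank k (planeLine b z ℓ) = 2 := by
  have hdot : (dotProductBilin k k ℓ : (Fin 3 → k) →ₗ[k] k) ≠ 0 := fun h =>
    hℓ (dotProduct_eq_zero_iff.1 fun p => LinearMap.congr_fun h p)
  have hker := Module.Dual.finrank_ker_add_one_of_ne_zero hdot
  rw [Module.finrank_fin_fun] at hker
  rw [planeLine, (Submodule.equivMapOfInjective _ (planeMap_injective b hz) _).finrank_eq.symm]
  lia

lemma planeLine_ne (hz : z ∉ L) (hℓ : ℓ 0 ≠ 0 ∨ ℓ 1 ≠ 0) : planeLine b z ℓ ≠ L := by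
  rintro h
  have hb (i : Fin 2) : ℓ (Fin.castSucc i) = 0 := by
    have hmem := h.ge (b i).2
    have hi : planeMap b z (Pi.single i.castSucc 1) = b i := by
      rw [planeMap_apply]; fin_cases i <;> simp
    simpa [← hi, planeMap_mem_planeLine b hz] using hmem
  exact hℓ.elim (· (hb 0)) (· (hb 1))

lemma planeLine_ne_planeLine (hz : z ∉ L) (h : LinearIndependent k ![ℓ, ℓ']) :
    planeLine b z ℓ ≠ planeLine b z ℓ' := by
  intro heq
  refine crossProduct_ne_zero_iff_linearIndependent.2 h (dotProduct_eq_zero_iff.1 fun w => ?_)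
  have hmem : planeMap b z (crossProduct w ℓ) ∈ planeLine b z ℓ :=
    (planeMap_mem_planeLine b hz).2 (dot_cross_self ..)
  rw [heq, planeMap_mem_planeLine b hz] at hmem
  rwa [dotProduct_comm, triple_product_permutation, triple_product_permutation]

end PlaneLine

section Tritangent

variable {k V : Type*} [Field k] [AddCommGroup V] [Module k V] {T : TrilinearForm k V}
  {L M N P m m' : Submodule k V} {z z₀ z₁ : V}

lemma le_or_le_or_le_of_forall_mem [Infinite k]
    (h : ∀ x ∈ M, x ∈ L ∨ x ∈ N ∨ x ∈ P) : M ≤ L ∨ M ≤ N ∨ M ≤ P := by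
  obtain ⟨i, hi⟩ := Subspace.exists_eq_top_of_iUnion_eq_univ (k := k)
    (p := ![L.comap M.subtype, N.comap M.subtype, P.comap M.subtype]) <|
    Set.eq_univ_iff_forall.2 fun x => by
      simpa [Fin.exists_fin_succ] using h x x.2
  fin_cases i
  exacts [.inl (Submodule.comap_subtype_eq_top.1 hi),
    .inr (.inl (Submodule.comap_subtype_eq_top.1 hi)),
    .inr (.inr (Submodule.comap_subtype_eq_top.1 hi))]

lemma exists_ne_zero_of_not_disjoint (h : ¬ Disjoint M N) : ∃ x ∈ M, x ∈ N ∧ x ≠ 0 := by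
  simpa [Submodule.disjoint_def] using h

lemma not_disjoint_of_finrank_lt [FiniteDimensional k P] (hM : M ≤ P) (hN : N ≤ P)
    (h : Module.finrank k P < Module.finrank k M + Module.finrank k N) : ¬ Disjoint M N := by
  intro hd
  have := Submodule.finiteDimensional_of_le hM
  have := Submodule.finiteDimensional_of_le hN
  have hsum := Submodule.finrank_sup_add_finrank_inf_eq M N
  rw [hd.eq_bot, finrank_bot] at hsum
  have hle := Submodule.finrank_mono (sup_le hM hN)
  lia

lemma IsLine.finrank_sup_span_singleton_le (hL : IsLine T L) (z : V) :
    Module.finrank k ↥(L ⊔ Submodule.span k {z}) ≤ 3 := by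
  have := hL.finiteDimensional
  have hle := Submodule.finrank_add_le_finrank_add_finrank L (Submodule.span k {z})
  have hz := finrank_span_le_card (R := k) ({z} : Set V)
  rw [hL.1] at hle
  simp only [Set.toFinset_singleton, Finset.card_singleton] at hz
  lia

lemma IsLine.le_sup_span_singleton (hM : IsLine T M) (hd : ¬ Disjoint M L) {w : V} (hw : w ∈ M)
    (hwL : w ∉ L) : M ≤ L ⊔ Submodule.span k {w} := by
  have := hM.finiteDimensional
  have hle : M ⊓ L ⊔ Submodule.span k {w} ≤ M :=
    sup_le inf_le_left ((Submodule.span_singleton_le_iff_mem w M).2 hw)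
  have := Submodule.finiteDimensional_of_le hle
  have hlt : M ⊓ L < M ⊓ L ⊔ Submodule.span k {w} :=
    left_lt_sup.2 fun h => hwL ((Submodule.span_singleton_le_iff_mem w _).1 h).2
  have hpos : 1 ≤ Module.finrank k ↥(M ⊓ L) := by
    rwa [Submodule.one_le_finrank_iff, ne_eq, ← disjoint_iff]
  rw [← Submodule.eq_of_le_of_finrank_le hle
    (by have := Submodule.finrank_lt_finrank_of_lt hlt; have := hM.1; lia)]
  exact sup_le_sup_right inf_le_right _

/-- A line of the surface other than `L` in the plane spanned by `L` and `z`. -/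
structure IsResidualLine (T : TrilinearForm k V) (L : Submodule k V) (z : V)
    (m : Submodule k V) : Prop where
  isLine : IsLine T m
  ne : m ≠ L
  le : m ≤ L ⊔ Submodule.span k {z}

/-- The plane spanned by `L` and `z` meets the surface in the three distinct lines `L`, `m`
and `m'`. -/
structure IsTritangent (T : TrilinearForm k V) (L : Submodule k V) (z : V)
    (m m' : Submodule k V) : Prop where
  left : IsResidualLine T L z m
  right : IsResidualLine T L z m'
  ne : m ≠ m'
  cover : ∀ x ∈ L ⊔ Submodule.span k {z}, cubic T x = 0 → x ∈ L ∨ x ∈ m ∨ x ∈ m'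

namespace IsResidualLine

lemma not_disjoint (h : IsResidualLine T L z m) (hM : IsResidualLine T L z M) (hL : IsLine T L) :
    ¬ Disjoint m M := by
  have := hL.finiteDimensional
  refine not_disjoint_of_finrank_lt h.le hM.le ?_
  rw [h.isLine.1, hM.isLine.1]
  exact Nat.lt_succ_of_le (hL.finrank_sup_span_singleton_le z)

lemma not_disjoint_base (h : IsResidualLine T L z m) (hL : IsLine T L) : ¬ Disjoint m L := by
  have := hL.finiteDimensional
  refine not_disjoint_of_finrank_lt h.le le_sup_left ?_
  rw [h.isLine.1, hL.1]
  exact Nat.lt_succ_of_le (hL.finrank_sup_span_singleton_le z)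

lemma exists_mem_notMem (h : IsResidualLine T L z m) (hL : IsLine T L) : ∃ w ∈ m, w ∉ L :=
  Set.not_subset.1 fun hle => h.ne (h.isLine.eq_of_le hL hle)

lemma disc_eq_zero [Infinite k] (h : IsResidualLine T L z m) (hL : IsLine T L)
    (b : Module.Basis (Fin 2) k L) : (residualConic T b z).disc = 0 := by
  obtain ⟨y, hym, hyL, hy⟩ := exists_ne_zero_of_not_disjoint (h.not_disjoint_base hL)
  obtain ⟨w, hwm, hwL⟩ := h.exists_mem_notMem hL
  have hwy : LinearIndependent k ![w, y] :=
    linearIndependent_fin2.2 ⟨hy, fun a (ha : a • y = w) => hwL (ha ▸ L.smul_mem a hyL)⟩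
  obtain ⟨p, rfl⟩ := exists_eq_planeMap b z (h.le hwm)
  obtain ⟨r, rfl⟩ := exists_eq_planeMap b z (h.le hym)
  have hp : p 2 ≠ 0 := fun hp => hwL (planeMap_mem_of_eq_zero b z p hp)
  have hpp := h.isLine.2 _ hwm
  have hpr := h.isLine.polar_eq_zero hwm hym
  have hrp := h.isLine.polar_eq_zero hym hwm
  rw [hL.cubic_planeMap] at hpp
  rw [hL.polar_planeMap] at hpr hrp
  have hp₀ := (mul_eq_zero.1 hpp).resolve_left hp
  rw [hp₀, mul_zero, zero_add] at hpr
  have hpr₀ := (mul_eq_zero.1 hpr).resolve_left hp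
  rw [TernaryQuadratic.polar_comm, hpr₀, mul_zero, add_zero] at hrp
  refine TernaryQuadratic.disc_eq_zero_of_isotropic (.of_comp (planeMap b z) ?_) hp₀
    ((mul_eq_zero.1 hrp).resolve_left hp) hpr₀
  convert hwy using 1
  ext i; fin_cases i <;> rfl

end IsResidualLine

lemma IsTritangent.eq_or_eq [Infinite k] (h : IsTritangent T L z m m') (hL : IsLine T L)
    (hM : IsResidualLine T L z M) : M = m ∨ M = m' := by
  rcases le_or_le_or_le_of_forall_mem fun x hx => h.cover x (hM.le hx) (hM.isLine.2 x hx) with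
    hle | hle | hle
  · exact absurd (hM.isLine.eq_of_le hL hle) hM.ne
  · exact .inl (hM.isLine.eq_of_le h.left.isLine hle)
  · exact .inr (hM.isLine.eq_of_le h.right.isLine hle)

lemma IsLine.exists_isResidualLine (hM : IsLine T M) (h : IsTransverse L z₀ z₁) (hL : IsLine T L)
    (hne : M ≠ L) (hd : ¬ Disjoint M L) :
    (∃ t : k, IsResidualLine T L (z₀ + t • z₁) M) ∨ IsResidualLine T L z₁ M := by
  obtain ⟨w, hwM, hwL⟩ : ∃ w ∈ M, w ∉ L := Set.not_subset.1 fun hle => hne (hM.eq_of_le hL hle)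
  have hresidual {z : V} (hz : w ∈ L ⊔ Submodule.span k {z}) : IsResidualLine T L z M :=
    ⟨hM, hne, (hM.le_sup_span_singleton hd hwM hwL).trans
      (sup_le le_sup_left ((Submodule.span_singleton_le_iff_mem _ _).2 hz))⟩
  have hmem {l z : V} (hl : l ∈ L) (s : k) : l + s • z ∈ L ⊔ Submodule.span k {z} :=
    Submodule.add_mem_sup hl (Submodule.smul_mem _ s (Submodule.mem_span_singleton_self z))
  obtain ⟨l, hl, s, t, rfl⟩ := h.exists_eq w
  rcases eq_or_ne s 0 with rfl | hs
  · refine .inr (hresidual ?_)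
    rw [zero_smul, add_zero]
    exact hmem hl t
  · refine .inl ⟨t / s, hresidual ?_⟩
    rw [add_assoc, show s • z₀ + t • z₁ = s • (z₀ + (t / s) • z₁) by
      rw [smul_add, smul_smul, mul_div_cancel₀ t hs]]
    exact hmem hl s

lemma isResidualLine_planeLine (hL : IsLine T L) (hz : z ∉ L) {b : Module.Basis (Fin 2) k L}
    {ℓ ℓ' : Fin 3 → k} (hq : residualConic T b z = TernaryQuadratic.linearMul ℓ ℓ')
    (hℓ : ℓ 0 ≠ 0 ∨ ℓ 1 ≠ 0) : IsResidualLine T L z (planeLine b z ℓ) where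
  isLine := by
    refine ⟨finrank_planeLine b hz (by rintro rfl; simp at hℓ), ?_⟩
    rintro _ ⟨p, hp, rfl⟩
    rw [hL.cubic_planeMap, hq, TernaryQuadratic.eval_linearMul, show ℓ ⬝ᵥ p = 0 from hp, zero_mul,
      mul_zero]
  ne := planeLine_ne b hz hℓ
  le := planeLine_le b z

lemma Smooth.exists_isTritangent [IsAlgClosed k] (hT : Smooth T) (hL : IsLine T L)
    (h : IsTransverse L z₀ z₁) {b : Module.Basis (Fin 2) k L}
    (hdisc : (residualConic T b z₀).disc = 0) : ∃ m m', IsTritangent T L z₀ m m' := by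
  obtain ⟨ℓ, ℓ', hq⟩ := TernaryQuadratic.exists_eq_linearMul_of_disc_eq_zero hdisc
  have hq' := hq.trans (TernaryQuadratic.linearMul_comm ℓ ℓ')
  have hz := h.left_notMem
  refine ⟨planeLine b z₀ ℓ, planeLine b z₀ ℓ', ?_, ?_, ?_, fun x hx hx₀ => ?_⟩
  · exact isResidualLine_planeLine hL hz hq
      (hT.coord_ne_zero_of_residualConic_eq_linearMul hL h hq)
  · exact isResidualLine_planeLine hL hz hq'
      (hT.coord_ne_zero_of_residualConic_eq_linearMul hL h hq')
  · exact planeLine_ne_planeLine b hz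
      (hT.linearIndependent_of_residualConic_eq_linearMul hL h hq)
  · obtain ⟨p, rfl⟩ := exists_eq_planeMap b z₀ hx
    rw [hL.cubic_planeMap, hq, TernaryQuadratic.eval_linearMul, mul_eq_zero, mul_eq_zero] at hx₀
    simp only [planeMap_mem_planeLine b hz]
    exact hx₀.imp_left (planeMap_mem_of_eq_zero b z₀ p)

end Tritangent

section TritangentPencil

variable {k V : Type*} [Field k] [AddCommGroup V] [Module k V] {T : TrilinearForm k V}
  {L M : Submodule k V}

/-- The five tritangent planes `L ⊔ span {z₀ + param i • z₁}` through the line `L`, with the ten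
lines of the surface which meet `L`. The plane of the pencil at infinity, `L ⊔ span {z₁}`, is
chosen not to be tritangent. -/
structure TritangentPencil (T : TrilinearForm k V) (L : Submodule k V) where
  z₀ : V
  z₁ : V
  isTransverse : IsTransverse L z₀ z₁
  param : Fin 5 → k
  param_injective : Function.Injective param
  left : Fin 5 → Submodule k V
  right : Fin 5 → Submodule k V
  isTritangent : ∀ i, IsTritangent T L (z₀ + param i • z₁) (left i) (right i)
  exists_isResidualLine : ∀ M, IsLine T M → M ≠ L → ¬ Disjoint M L →
    ∃ i, IsResidualLine T L (z₀ + param i • z₁) M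

/-- The lines of the surface `cubic T = 0` which meet the line `L`, without `L` itself. -/
def linesMeeting (T : TrilinearForm k V) (L : Submodule k V) : Set (Submodule k V) :=
  {M | IsLine T M ∧ M ≠ L ∧ ¬ Disjoint M L}

lemma finrank_quotient_eq_two (hV : Module.finrank k V = 4) (hL : IsLine T L) :
    Module.finrank k (V ⧸ L) = 2 := by
  have := Module.finite_of_finrank_eq_succ hV
  have := L.finrank_quotient_add_finrank
  have := hL.1
  lia

lemma Smooth.nonempty_tritangentPencil [IsAlgClosed k] (hT : Smooth T)
    (hV : Module.finrank k V = 4) (hL : IsLine T L) : Nonempty (TritangentPencil T L) := by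
  have := hL.finiteDimensional
  let b := Module.finBasisOfFinrankEq k L hL.1
  obtain ⟨z₀, z₁, h, h₁⟩ := hT.exists_isTransverse_disc_ne_zero b hL (finrank_quotient_eq_two hV hL)
  obtain ⟨t, ht, hdisc⟩ := hT.exists_injective_forall_disc_eq_zero_iff b hL h h₁
  choose m m' hm using fun i => hT.exists_isTritangent hL (h.shift (t i)) ((hdisc _).2 ⟨i, rfl⟩)
  refine ⟨⟨z₀, z₁, h, t, ht, m, m', hm, fun M hM hne hd => ?_⟩⟩
  rcases hM.exists_isResidualLine h hL hne hd with ⟨s, hs⟩ | h'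
  · obtain ⟨i, rfl⟩ := (hdisc s).1 (hs.disc_eq_zero hL b)
    exact ⟨i, hs⟩
  · exact absurd (h'.disc_eq_zero hL b) h₁

lemma IsResidualLine.mem_linesMeeting {z : V} (h : IsResidualLine T L z M) (hL : IsLine T L) :
    M ∈ linesMeeting T L :=
  ⟨h.isLine, h.ne, h.not_disjoint_base hL⟩

lemma IsLine.mem_linesMeeting_of_mem (hL : IsLine T L) (hM : M ∈ linesMeeting T L) :
    L ∈ linesMeeting T M :=
  ⟨hL, hM.2.1.symm, fun h => hM.2.2 h.symm⟩

lemma TritangentPencil.linesMeeting_subset [Infinite k] (P : TritangentPencil T L)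
    (hL : IsLine T L) : linesMeeting T L ⊆ P.left '' Set.univ ∪ P.right '' Set.univ := by
  rintro M ⟨hM, hne, hd⟩
  obtain ⟨i, hi⟩ := P.exists_isResidualLine M hM hne hd
  exact ((P.isTritangent i).eq_or_eq hL hi).imp (fun h => ⟨i, trivial, h.symm⟩)
    (fun h => ⟨i, trivial, h.symm⟩)

lemma Smooth.encard_linesMeeting_le [IsAlgClosed k] (hT : Smooth T) (hV : Module.finrank k V = 4)
    (hL : IsLine T L) : (linesMeeting T L).encard ≤ 10 := by
  obtain ⟨P⟩ := hT.nonempty_tritangentPencil hV hL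
  calc (linesMeeting T L).encard ≤ _ := Set.encard_le_encard (P.linesMeeting_subset hL)
    _ ≤ _ := Set.encard_union_le _ _
    _ ≤ (Set.univ : Set (Fin 5)).encard + (Set.univ : Set (Fin 5)).encard :=
      add_le_add (Set.encard_image_le ..) (Set.encard_image_le ..)
    _ = 10 := by simp [Set.encard_univ]; norm_num

lemma Smooth.encard_linesMeeting_sdiff_pair_le [IsAlgClosed k] (hT : Smooth T)
    (hV : Module.finrank k V = 4) (hL : IsLine T L) {m m' : Submodule k V}
    (hm : m ∈ linesMeeting T L) (hm' : m' ∈ linesMeeting T L) (hne : m ≠ m') :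
    (linesMeeting T L \ {m, m'}).encard ≤ 8 := by
  have h := hT.encard_linesMeeting_le hV hL
  rw [← Set.encard_sdiff_add_encard_of_subset (Set.pair_subset hm hm'), Set.encard_pair hne,
    show (10 : ℕ∞) = 8 + 2 from rfl] at h
  exact (ENat.add_le_add_iff_right (by decide)).1 h

lemma IsTritangent.eq_or_mem_linesMeeting {z : V} {m m' : Submodule k V}
    (h : IsTritangent T L z m m') (hV : Module.finrank k V = 4) (hL : IsLine T L) (hz : z ∉ L)
    (hM : IsLine T M) :
    M ∈ ({L, m, m'} : Set _) ∪ linesMeeting T L ∪ linesMeeting T m ∪ linesMeeting T m' := by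
  have := Module.finite_of_finrank_eq_succ hV
  have hlt : Module.finrank k L < Module.finrank k ↥(L ⊔ Submodule.span k {z}) :=
    Submodule.finrank_lt_finrank_of_lt
      (left_lt_sup.2 fun h => hz ((Submodule.span_singleton_le_iff_mem z L).1 h))
  obtain ⟨x, hxM, hxP, hx⟩ := exists_ne_zero_of_not_disjoint <|
    not_disjoint_of_finrank_lt (le_top (a := M)) (le_top (a := L ⊔ Submodule.span k {z})) <| by
      rw [finrank_top, hV, hM.1]; rw [hL.1] at hlt; lia
  have hmeet {N : Submodule k V} (hxN : x ∈ N) : M = N ∨ M ∈ linesMeeting T N :=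
    or_iff_not_imp_left.2 fun hne => ⟨hM, hne, fun hd => hx (Submodule.disjoint_def.1 hd x hxM hxN)⟩
  simp only [Set.mem_union, Set.mem_insert_iff, Set.mem_singleton_iff]
  rcases h.cover x hxP (hM.2 x hxM) with h | h | h <;> rcases hmeet h with h | h <;> simp [h]

theorem Smooth.encard_setOf_isLine_le [IsAlgClosed k] (hT : Smooth T)
    (hV : Module.finrank k V = 4) : {M | IsLine T M}.encard ≤ 27 := by
  rcases Set.eq_empty_or_nonempty {M | IsLine T M} with h | ⟨L, hL : IsLine T L⟩
  · simp [h]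
  obtain ⟨P⟩ := hT.nonempty_tritangentPencil hV hL
  have h := P.isTritangent 0
  have hz := (P.isTransverse.shift (P.param 0)).left_notMem
  set m := P.left 0
  set m' := P.right 0
  have hm := h.left.mem_linesMeeting hL
  have hm' := h.right.mem_linesMeeting hL
  have hmm' : m ∈ linesMeeting T m' := ⟨h.left.isLine, h.ne, h.left.not_disjoint h.right hL⟩
  have hsub : {M | IsLine T M} ⊆ {L, m, m'} ∪ linesMeeting T L \ {m, m'} ∪
      linesMeeting T m \ {L, m'} ∪ linesMeeting T m' \ {L, m} := by
    intro M hM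
    have := h.eq_or_mem_linesMeeting hV hL hz hM
    grind [linesMeeting]
  calc {M | IsLine T M}.encard
      ≤ ({L, m, m'} : Set _).encard + (linesMeeting T L \ {m, m'}).encard +
        (linesMeeting T m \ {L, m'}).encard + (linesMeeting T m' \ {L, m}).encard :=
        (Set.encard_le_encard hsub).trans <| (Set.encard_union_le _ _).trans <|
          add_le_add_left ((Set.encard_union_le _ _).trans <|
            add_le_add_left (Set.encard_union_le _ _) _) _
    _ ≤ 3 + 8 + 8 + 8 := by
      gcongr
      · exact (Set.encard_insert_le ..).trans (by rw [Set.encard_pair h.ne]; rfl)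
      · exact hT.encard_linesMeeting_sdiff_pair_le hV hL hm hm' h.ne
      · exact hT.encard_linesMeeting_sdiff_pair_le hV h.left.isLine (hL.mem_linesMeeting_of_mem hm)
          (h.right.isLine.mem_linesMeeting_of_mem hmm') h.right.ne.symm
      · exact hT.encard_linesMeeting_sdiff_pair_le hV h.right.isLine
          (hL.mem_linesMeeting_of_mem hm') hmm' h.left.ne.symm
    _ = 27 := by norm_num

end TritangentPencil

section Similitude

variable {k V : Type*} [Field k] [AddCommGroup V] [Module k V] {T : TrilinearForm k V} {c : k}
  {g : V →ₗ[k] V}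

/-- Linear maps which multiply the cubic form `cubic T` by the factor `c`. -/
def IsSimilitude (T : TrilinearForm k V) (c : k) (g : V →ₗ[k] V) : Prop :=
  ∀ x, cubic T (g x) = c * cubic T x

namespace IsSimilitude

lemma polar_map [Infinite k] (h : IsSimilitude T c g) (x y : V) :
    polar T (g x) (g y) = c * polar T x y := by
  rw [← sub_eq_zero]
  refine eq_zero_of_forall_mul_add_sq_mul (b := polar T (g y) (g x) - c * polar T y x) fun t => ?_
  have ht := h (x + t • y)
  simp only [map_add, map_smul, cubic_add, cubic_smul, polar_smul_left, smul_eq_mul, h x, h y] at ht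
  linear_combination ht

lemma isLine_map (h : IsSimilitude T c g) (hg : Function.Injective g) {L : Submodule k V}
    (hL : IsLine T L) : IsLine T (L.map g) := by
  refine ⟨(Submodule.equivMapOfInjective g hg L).finrank_eq.symm.trans hL.1, ?_⟩
  rintro _ ⟨x, hx, rfl⟩
  rw [h, hL.2 x hx, mul_zero]

end IsSimilitude

end Similitude

section Rigidity

variable {k V : Type*} [Field k] [AddCommGroup V] [Module k V] {T : TrilinearForm k V}
  {L m : Submodule k V} {z z₀ z₁ : V} {g : V →ₗ[k] V} {a b c : k}

lemma exists_forall_eq_smul_of_eigenvectors (hV : Module.finrank k V = 2) {e : Fin 3 → V}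
    (he : Pairwise fun i j => LinearIndependent k ![e i, e j])
    (hg : ∀ i, g (e i) ∈ Submodule.span k {e i}) : ∃ a : k, ∀ x, g x = a • x := by
  have := Module.finite_of_finrank_eq_succ hV
  have hspan : Submodule.span k (Set.range ![e 0, e 1]) = ⊤ :=
    (he (by decide : (0 : Fin 3) ≠ 1)).span_eq_top_of_card_eq_finrank' (by simp [hV])
  have hmem (x : V) : ∃ α β : k, α • e 0 + β • e 1 = x := by
    have hx : x ∈ Submodule.span k (Set.range ![e 0, e 1]) := hspan ▸ Submodule.mem_top
    rwa [Matrix.range_cons_cons_empty, Submodule.mem_span_pair] at hx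
  choose μ hμ using fun i => Submodule.mem_span_singleton.1 (hg i)
  obtain ⟨α, β, he₂⟩ := hmem (e 2)
  have h₀₁ := LinearIndependent.pair_iff.1 (he (by decide : (0 : Fin 3) ≠ 1))
  have hα : α ≠ 0 := by
    rintro rfl
    have := LinearIndependent.pair_iff.1 (he (by decide : (1 : Fin 3) ≠ 2)) β (-1)
      (by rw [← he₂]; module)
    simp at this
  have hβ : β ≠ 0 := by
    rintro rfl
    have := LinearIndependent.pair_iff.1 (he (by decide : (0 : Fin 3) ≠ 2)) α (-1)
      (by rw [← he₂]; module)
    simp at this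
  have hμ₂ : (α * (μ 0 - μ 2)) • e 0 + (β * (μ 1 - μ 2)) • e 1 = 0 := by
    have h := hμ 2
    rw [← he₂, map_add, map_smul, map_smul, ← hμ 0, ← hμ 1, ← sub_eq_zero] at h
    rw [← neg_eq_zero, ← h]
    module
  obtain ⟨h₀, h₁⟩ := h₀₁ _ _ hμ₂
  have h₀' := sub_eq_zero.1 ((mul_eq_zero.1 h₀).resolve_left hα)
  have h₁' := sub_eq_zero.1 ((mul_eq_zero.1 h₁).resolve_left hβ)
  refine ⟨μ 2, fun x => ?_⟩
  obtain ⟨r, s, rfl⟩ := hmem x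
  rw [map_add, map_smul, map_smul, ← hμ 0, ← hμ 1, h₀', h₁']
  module

lemma coeffs_eq_zero_of_four_roots {a₀ a₁ a₂ a₃ : k} {t : Fin 4 → k} (ht : Function.Injective t)
    (h : ∀ i, a₀ + a₁ * t i + a₂ * t i ^ 2 + a₃ * t i ^ 3 = 0) :
    a₀ = 0 ∧ a₁ = 0 ∧ a₂ = 0 ∧ a₃ = 0 := by
  have ha : ![a₀, a₁, a₂, a₃] = 0 :=
    Matrix.eq_zero_of_forall_index_sum_mul_pow_eq_zero ht fun i => by
      simpa [Fin.sum_univ_four] using h i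
  exact ⟨congrFun ha 0, congrFun ha 1, congrFun ha 2, congrFun ha 3⟩

namespace IsResidualLine

lemma exists_add_mem (h : IsResidualLine T L z m) (hL : IsLine T L) : ∃ l ∈ L, l + z ∈ m := by
  obtain ⟨w, hwm, hwL⟩ := h.exists_mem_notMem hL
  obtain ⟨l, hl, _, hz, rfl⟩ := Submodule.mem_sup.1 (h.le hwm)
  obtain ⟨s, rfl⟩ := Submodule.mem_span_singleton.1 hz
  have hs : s ≠ 0 := by rintro rfl; simp [hl] at hwL
  refine ⟨s⁻¹ • l, L.smul_mem _ hl, ?_⟩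
  simpa [smul_smul, hs] using m.smul_mem s⁻¹ hwm

lemma polar_eq_zero [Infinite k] (h : IsResidualLine T L z m) (hL : IsLine T L) {p : V}
    (hpm : p ∈ m) (hpL : p ∈ L) : polar T p z = 0 := by
  obtain ⟨l, hl, hlz⟩ := h.exists_add_mem hL
  simpa [hL.polar_eq_zero hpL hl] using h.isLine.polar_eq_zero hpm hlz

end IsResidualLine

lemma IsTransverse.eq_zero_of_mem_residualLines [Infinite k] (h : IsTransverse L z₀ z₁)
    (hT : Smooth T) (hL : IsLine T L) {s t : k} (hst : s ≠ t) {m' : Submodule k V}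
    (hm : IsResidualLine T L (z₀ + s • z₁) m) (hm' : IsResidualLine T L (z₀ + t • z₁) m')
    {p : V} (hp : p ∈ L) (hpm : p ∈ m) (hpm' : p ∈ m') : p = 0 := by
  have hs := hm.polar_eq_zero hL hpm hp
  have ht := hm'.polar_eq_zero hL hpm' hp
  rw [map_add, map_smul, smul_eq_mul] at hs ht
  have h₁ : polar T p z₁ = 0 :=
    (mul_eq_zero.1 (by linear_combination hs - ht : (s - t) * polar T p z₁ = 0)).resolve_left
      (sub_ne_zero.2 hst)
  exact h.eq_zero_of_singular hT (hL.2 p hp) (fun l hl => hL.polar_eq_zero hp hl)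
    (by simpa [h₁] using hs) h₁

/-- The linear map `g` acts on `L` as the scalar `a` and on `V ⧸ L` as the scalar `b`. -/
structure ActsByScalars (g : V →ₗ[k] V) (L : Submodule k V) (a b : k) : Prop where
  eq_smul : ∀ l ∈ L, g l = a • l
  sub_smul_mem : ∀ x, g x - b • x ∈ L

lemma IsLine.mem_span_singleton (hL : IsLine T L) (hm : IsLine T m) (hne : m ≠ L) {p x : V}
    (hp : p ∈ m ⊓ L) (hp₀ : p ≠ 0) (hx : x ∈ m ⊓ L) : x ∈ Submodule.span k {p} := by
  have := hm.finiteDimensional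
  have hlt : Module.finrank k ↥(m ⊓ L) < 2 := by
    rw [← hm.1]
    exact Submodule.finrank_lt_finrank_of_lt
      (inf_lt_left.2 fun hle => hne (hm.eq_of_le hL hle))
  have hspan : Submodule.span k {p} = m ⊓ L :=
    have := Submodule.finiteDimensional_of_le (inf_le_left : m ⊓ L ≤ m)
    Submodule.eq_of_le_of_finrank_le ((Submodule.span_singleton_le_iff_mem _ _).2 hp)
      (by rw [finrank_span_singleton hp₀]; lia)
  rwa [hspan]

section ThreeLines

variable {t : Fin 3 → k} {m : Fin 3 → Submodule k V}

lemma exists_forall_mem_eq_smul [Infinite k] (hT : Smooth T) (hL : IsLine T L)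
    (h : IsTransverse L z₀ z₁) (ht : Function.Injective t)
    (hm : ∀ i, IsResidualLine T L (z₀ + t i • z₁) (m i)) (hgL : ∀ x ∈ L, g x ∈ L)
    (hgm : ∀ i, ∀ x ∈ m i, g x ∈ m i) : ∃ a : k, ∀ x ∈ L, g x = a • x := by
  choose p hpm hpL hp using fun i => exists_ne_zero_of_not_disjoint ((hm i).not_disjoint_base hL)
  have hpair : Pairwise fun i j => LinearIndependent k
      ![(⟨p i, hpL i⟩ : L), (⟨p j, hpL j⟩ : L)] := fun i j hij =>
    linearIndependent_fin2.2 ⟨fun h₀ => hp j (congrArg Subtype.val h₀), fun s hs => hp i <|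
      h.eq_zero_of_mem_residualLines hT hL (ht.ne hij) (hm i) (hm j) (hpL i) (hpm i) <|
        (show s • p j = p i from congrArg Subtype.val hs) ▸ (m j).smul_mem s (hpm j)⟩
  have hspan (i : Fin 3) : g.restrict hgL ⟨p i, hpL i⟩ ∈ Submodule.span k {⟨p i, hpL i⟩} := by
    obtain ⟨s, hs⟩ := Submodule.mem_span_singleton.1 <| hL.mem_span_singleton (hm i).isLine
      (hm i).ne ⟨hpm i, hpL i⟩ (hp i) ⟨hgm i _ (hpm i), hgL _ (hpL i)⟩
    exact Submodule.mem_span_singleton.2 ⟨s, Subtype.ext hs⟩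
  obtain ⟨a, ha⟩ := exists_forall_eq_smul_of_eigenvectors hL.1 hpair hspan
  exact ⟨a, fun x hx => congrArg Subtype.val (ha ⟨x, hx⟩)⟩

lemma exists_forall_sub_smul_mem (hL : IsLine T L) (hV : Module.finrank k (V ⧸ L) = 2)
    (h : IsTransverse L z₀ z₁) (ht : Function.Injective t)
    (hm : ∀ i, IsResidualLine T L (z₀ + t i • z₁) (m i)) (hgL : ∀ x ∈ L, g x ∈ L)
    (hgm : ∀ i, ∀ x ∈ m i, g x ∈ m i) : ∃ b : k, ∀ x, g x - b • x ∈ L := by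
  have hpair : Pairwise fun i j => LinearIndependent k
      ![L.mkQ (z₀ + t i • z₁), L.mkQ (z₀ + t j • z₁)] := by
    refine fun i j hij => linearIndependent_fin2.2
      ⟨fun h₀ => (h.shift (t j)).left_notMem ((Submodule.Quotient.mk_eq_zero L).1 h₀),
        fun s hs => ?_⟩
    obtain ⟨hs₁, hst⟩ := h.indep (s - 1) (s * t j - t i) <| by
      convert (Submodule.Quotient.eq L).1 hs using 1
      module
    rw [sub_eq_zero.1 hs₁, one_mul, sub_eq_zero] at hst
    exact hij (ht hst).symm
  have hspan (i : Fin 3) : L.mapQ L g hgL (L.mkQ (z₀ + t i • z₁)) ∈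
      Submodule.span k {L.mkQ (z₀ + t i • z₁)} := by
    obtain ⟨l, hl, hlm⟩ := (hm i).exists_add_mem hL
    have hmem := Submodule.mem_map_of_mem (f := L.mkQ) ((hm i).le (hgm i _ hlm))
    have hgl : L.mkQ (g (l + (z₀ + t i • z₁))) = L.mkQ (g (z₀ + t i • z₁)) :=
      (Submodule.Quotient.eq L).2 (by simpa only [map_add, add_sub_cancel_right] using hgL l hl)
    rwa [Submodule.map_sup, L.mkQ_map_self, bot_sup_eq, Submodule.map_span, Set.image_singleton,
      hgl] at hmem
  obtain ⟨b, hb⟩ := exists_forall_eq_smul_of_eigenvectors hV hpair hspan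
  exact ⟨b, fun x => (Submodule.Quotient.eq L).1 (hb (L.mkQ x))⟩

lemma exists_actsByScalars [Infinite k] (hT : Smooth T) (hL : IsLine T L)
    (hV : Module.finrank k (V ⧸ L) = 2) (h : IsTransverse L z₀ z₁) (ht : Function.Injective t)
    (hm : ∀ i, IsResidualLine T L (z₀ + t i • z₁) (m i)) (hgL : ∀ x ∈ L, g x ∈ L)
    (hgm : ∀ i, ∀ x ∈ m i, g x ∈ m i) : ∃ a b, ActsByScalars g L a b := by
  obtain ⟨a, ha⟩ := exists_forall_mem_eq_smul hT hL h ht hm hgL hgm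
  obtain ⟨b, hb⟩ := exists_forall_sub_smul_mem hL hV h ht hm hgL hgm
  exact ⟨a, b, ha, hb⟩

end ThreeLines

namespace ActsByScalars

lemma map_mem (h : ActsByScalars g L a b) {x : V} (hx : x ∈ L ⊔ Submodule.span k {z}) :
    g x ∈ L ⊔ Submodule.span k {z} := by
  rw [← sub_add_cancel (g x) (b • x)]
  exact add_mem (Submodule.mem_sup_left (h.sub_smul_mem x)) (Submodule.smul_mem _ b hx)

lemma factor_eq [Infinite k] (h : ActsByScalars g L a b) (hT : Smooth T) (hL : IsLine T L)
    (hg : IsSimilitude T c g) : c = a ^ 2 * b := by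
  have := hL.finiteDimensional
  obtain ⟨p, hp, hp₀⟩ := Submodule.exists_mem_ne_zero_of_ne_bot
    (Submodule.one_le_finrank_iff.1 (hL.1.ge.trans' one_le_two))
  obtain ⟨w, hw⟩ : ∃ w, polar T p w ≠ 0 := by
    by_contra! hw
    exact hp₀ (hT p (hL.2 p hp) (LinearMap.ext hw))
  refine mul_right_cancel₀ hw ?_
  have hpol := hg.polar_map p w
  rw [h.eq_smul p hp, polar_smul_left, ← sub_add_cancel (g w) (b • w), map_add,
    hL.polar_eq_zero hp (h.sub_smul_mem w), map_smul, smul_eq_mul] at hpol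
  linear_combination -hpol

lemma sub_smul_add_smul_mem_of_mem (h : ActsByScalars g L a b) (hL : IsLine T L) {t : k}
    (hm : IsResidualLine T L (z₀ + t • z₁) m) (hgm : ∀ x ∈ m, g x ∈ m) :
    g z₀ - a • z₀ + t • (g z₁ - a • z₁) ∈ m := by
  obtain ⟨l, hl, hlm⟩ := hm.exists_add_mem hL
  convert m.sub_mem (hgm _ hlm) (m.smul_mem a hlm) using 1
  rw [map_add, h.eq_smul l hl, map_add, map_smul]
  module

lemma map_sub_smul (h : ActsByScalars g L a b) (x : V) :
    g (g x - a • x) = b • (g x - a • x) := by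
  have hx := h.eq_smul _ (h.sub_smul_mem x)
  rw [map_sub, map_smul, sub_eq_iff_eq_add] at hx
  rw [map_sub, map_smul, hx]
  module

lemma polar_sub_smul_eq_zero [Infinite k] (h : ActsByScalars g L a b) (hT : Smooth T)
    (hL : IsLine T L) (hg : IsSimilitude T c g) (hc : c ≠ 0) (hab : a ≠ b) (x : V) {l : V}
    (hl : l ∈ L) : polar T (g x - a • x) l = 0 := by
  have hfactor := h.factor_eq hT hL hg
  have hpol := hg.polar_map (g x - a • x) l
  rw [h.map_sub_smul, h.eq_smul l hl, polar_smul_left, map_smul, smul_eq_mul, hfactor] at hpol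
  have hab₀ : a * b ≠ 0 := by rintro h₀; exact hc (by linear_combination hfactor + a * h₀)
  refine (mul_eq_zero.1 ?_).resolve_left (mul_ne_zero hab₀ (sub_ne_zero.2 hab.symm))
  linear_combination hpol

lemma hessian_sub_smul_eq_zero [Infinite k] (h : ActsByScalars g L a a) (hT : Smooth T)
    (hL : IsLine T L) (hg : IsSimilitude T c g) (hc : c ≠ 0) (x : V) {l : V} (hl : l ∈ L) :
    hessian T x (g x - a • x) l = 0 := by
  have hfactor := h.factor_eq hT hL hg
  have ha : a ≠ 0 := by rintro rfl; simp [hc] at hfactor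
  have hpol := hg.polar_map x l
  have hu := hL.polar_eq_zero (h.sub_smul_mem x) hl
  rw [← add_sub_cancel (a • x) (g x), h.eq_smul l hl, polar_add_left, polar_smul_left] at hpol
  simp only [map_smul, LinearMap.smul_apply, smul_eq_mul, hu] at hpol
  refine (mul_eq_zero.1 ?_).resolve_left (pow_ne_zero 2 ha)
  linear_combination hpol + polar T x l * hfactor

section FourLines

variable {t : Fin 4 → k} {m : Fin 4 → Submodule k V}

lemma eq_smul_of_eq [Infinite k] (h : ActsByScalars g L a a) (hT : Smooth T) (hL : IsLine T L)
    (hg : IsSimilitude T c g) (hc : c ≠ 0) (hz : IsTransverse L z₀ z₁) (ht : Function.Injective t)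
    (hm : ∀ i, IsResidualLine T L (z₀ + t i • z₁) (m i)) (hgm : ∀ i, ∀ x ∈ m i, g x ∈ m i) (x : V) :
    g x = a • x := by
  set u₀ := g z₀ - a • z₀
  set u₁ := g z₁ - a • z₁
  have hu₀L : u₀ ∈ L := h.sub_smul_mem z₀
  have hu₁L : u₁ ∈ L := h.sub_smul_mem z₁
  have hroot (i : Fin 4) : polar T (u₀ + t i • u₁) (z₀ + t i • z₁) = 0 :=
    (hm i).polar_eq_zero hL (h.sub_smul_add_smul_mem_of_mem hL (hm i) (hgm i))
      (L.add_mem hu₀L (L.smul_mem _ hu₁L))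
  obtain ⟨h₀, h₁, h₂, h₃⟩ := coeffs_eq_zero_of_four_roots (a₀ := polar T u₀ z₀)
    (a₁ := polar T u₀ z₁ + hessian T u₀ u₁ z₀) (a₂ := polar T u₁ z₀ + hessian T u₀ u₁ z₁)
    (a₃ := polar T u₁ z₁) ht fun i => by
      rw [← hroot i]
      simp only [polar_add_left, polar_smul_left, map_add, map_smul, LinearMap.smul_apply,
        smul_eq_mul]
      ring
  rw [hessian_rotate, h.hessian_sub_smul_eq_zero hT hL hg hc z₀ hu₁L, add_zero] at h₁
  rw [hessian_rotate, hessian_swap_right, h.hessian_sub_smul_eq_zero hT hL hg hc z₁ hu₀L,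
    add_zero] at h₂
  have hzero {u : V} (hu : u ∈ L) (hz₀ : polar T u z₀ = 0) (hz₁ : polar T u z₁ = 0) : u = 0 :=
    hz.eq_zero_of_singular hT (hL.2 u hu) (fun l hl => hL.polar_eq_zero hu hl) hz₀ hz₁
  obtain ⟨l, hl, r, s, rfl⟩ := hz.exists_eq x
  rw [map_add, map_add, map_smul, map_smul, h.eq_smul l hl, sub_eq_zero.1 (hzero hu₀L h₀ h₁),
    sub_eq_zero.1 (hzero hu₁L h₂ h₃)]
  module

lemma scalars_eq [Infinite k] (h : ActsByScalars g L a b) (hT : Smooth T) (hL : IsLine T L)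
    (hg : IsSimilitude T c g) (hc : c ≠ 0) (hz : IsTransverse L z₀ z₁) (ht : Function.Injective t)
    (hm : ∀ i, IsResidualLine T L (z₀ + t i • z₁) (m i)) (hgm : ∀ i, ∀ x ∈ m i, g x ∈ m i) :
    a = b := by
  by_contra hab
  have hba : b - a ≠ 0 := sub_ne_zero.2 (Ne.symm hab)
  set u₀ := g z₀ - a • z₀ with hu₀
  set u₁ := g z₁ - a • z₁
  have hroot (i : Fin 4) : cubic T (u₀ + t i • u₁) = 0 :=
    (hm i).isLine.2 _ (h.sub_smul_add_smul_mem_of_mem hL (hm i) (hgm i))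
  obtain ⟨hcubic, hpolar₁, -⟩ := coeffs_eq_zero_of_four_roots (a₀ := cubic T u₀)
    (a₁ := polar T u₀ u₁) (a₂ := polar T u₁ u₀) (a₃ := cubic T u₁) ht fun i => by
      rw [← hroot i]
      simp only [cubic_add, cubic_smul, polar_smul_left, map_smul, smul_eq_mul]
      ring
  have hpolarL (l : V) (hl : l ∈ L) : polar T u₀ l = 0 :=
    h.polar_sub_smul_eq_zero hT hL hg hc hab z₀ hl
  have hpolar {z : V} (hu : polar T u₀ (g z - a • z) = 0) : polar T u₀ z = 0 := by
    have hL' := hpolarL _ (h.sub_smul_mem z)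
    rw [map_sub, map_smul, smul_eq_mul] at hu hL'
    refine (mul_eq_zero.1 ?_).resolve_left hba
    linear_combination hu - hL'
  have hu₀' : u₀ = 0 := hz.eq_zero_of_singular hT hcubic hpolarL
    (hpolar (by rw [← hu₀, polar_self, hcubic, mul_zero])) (hpolar hpolar₁)
  refine hz.left_notMem ((L.smul_mem_iff hba).1 ?_)
  convert L.sub_mem (hu₀' ▸ L.zero_mem : u₀ ∈ L) (h.sub_smul_mem z₀) using 1
  rw [hu₀]
  module

end FourLines

end ActsByScalars

theorem exists_forall_eq_smul_of_four_lines [Infinite k] (hT : Smooth T) (hL : IsLine T L)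
    (hV : Module.finrank k (V ⧸ L) = 2) (hg : IsSimilitude T c g) (hc : c ≠ 0)
    (hz : IsTransverse L z₀ z₁) {t : Fin 4 → k} (ht : Function.Injective t)
    {m : Fin 4 → Submodule k V} (hm : ∀ i, IsResidualLine T L (z₀ + t i • z₁) (m i))
    (hgL : ∀ x ∈ L, g x ∈ L) (hgm : ∀ i, ∀ x ∈ m i, g x ∈ m i) : ∃ a : k, ∀ x, g x = a • x := by
  obtain ⟨a, b, h⟩ := exists_actsByScalars hT hL hV hz (ht.comp (Fin.castSucc_injective 3))
    (fun i => hm i.castSucc) hgL (fun i => hgm i.castSucc)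
  obtain rfl := h.scalars_eq hT hL hg hc hz ht hm hgm
  exact ⟨a, h.eq_smul_of_eq hT hL hg hc hz ht hm hgm⟩

end Rigidity

section Stabilizer

open scoped Pointwise

lemma relIndex_mem_Icc_of_inf_stabilizer {G X : Type*} [Group G] [MulAction G X]
    {A B K : Subgroup G} {x : X} {s : Set X} {a n : ℕ} (hs : s.encard ≤ a)
    (hK : ∀ g ∈ K, g • x ∈ s) (hB : MulAction.stabilizer G x ⊓ K ≤ B)
    (h : A.relIndex B ∈ Set.Icc 1 n) : A.relIndex K ∈ Set.Icc 1 (a * n) := by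
  have hB₀ := Nat.ne_of_gt h.1
  have hinf : A.relIndex (MulAction.stabilizer G x ⊓ K) ∈ Set.Icc 1 n :=
    ⟨Nat.pos_of_ne_zero fun h₀ => hB₀ (Subgroup.relIndex_eq_zero_of_le_right hB h₀),
      (Subgroup.relIndex_le_of_le_right hB hB₀).trans h.2⟩
  have hsub : MulAction.orbit K x ⊆ s := by
    rintro _ ⟨g, rfl⟩
    exact hK g g.2
  have hfin : s.Finite := Set.finite_of_encard_le_coe hs
  have hcard : (MulAction.stabilizer G x).relIndex K = (MulAction.orbit K x).ncard :=
    MulAction.index_stabilizer K x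
  have hpos : 0 < (MulAction.stabilizer G x).relIndex K := by
    rw [hcard, Set.ncard_pos (hfin.subset hsub)]
    exact MulAction.nonempty_orbit x
  have hle : (MulAction.stabilizer G x).relIndex K ≤ a := by
    rw [hcard, ← ENat.natCast_le_natCast, (hfin.subset hsub).cast_ncard_eq]
    exact (Set.encard_le_encard hsub).trans hs
  have hdvd : A.relIndex K ∣ _ :=
    Subgroup.relIndex_dvd_of_le_left K (inf_le_left : A ⊓ MulAction.stabilizer G x ≤ A)
  rw [← Subgroup.relIndex_inf_mul_relIndex] at hdvd
  have hmul := Nat.mul_pos hinf.1 hpos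
  exact ⟨Nat.pos_of_dvd_of_pos hdvd hmul, (Nat.le_of_dvd hmul hdvd).trans <|
    (Nat.mul_le_mul hinf.2 hle).trans_eq (mul_comm n a)⟩

variable {k V : Type*} [Field k] [AddCommGroup V] [Module k V] {T : TrilinearForm k V}
  {L M : Submodule k V} {g : V ≃ₗ[k] V}

/-- The group of linear automorphisms which preserve the cubic surface `cubic T = 0`. -/
def similitudes (T : TrilinearForm k V) : Subgroup (V ≃ₗ[k] V) where
  carrier := {g | ∃ c ≠ 0, IsSimilitude T c g}
  one_mem' := ⟨1, one_ne_zero, fun x => (one_mul _).symm⟩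
  mul_mem' := by
    rintro g h ⟨c, hc, hg⟩ ⟨d, hd, hh⟩
    exact ⟨c * d, mul_ne_zero hc hd, fun x => (hg (h x)).trans (by rw [mul_assoc, ← hh x]; rfl)⟩
  inv_mem' := by
    rintro g ⟨c, hc, hg⟩
    refine ⟨c⁻¹, inv_ne_zero hc, fun x => ?_⟩
    rw [eq_inv_mul_iff_mul_eq₀ hc, ← hg]
    exact congrArg (cubic T) (g.apply_symm_apply x)

/-- The group of scalar automorphisms of `V`. -/
def homotheties (k V : Type*) [Field k] [AddCommGroup V] [Module k V] : Subgroup (V ≃ₗ[k] V) :=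
  (DistribMulAction.toModuleAut k V : kˣ →* V ≃ₗ[k] V).range

lemma mem_homotheties_of_forall_eq_smul [Nontrivial V] {a : k} (h : ∀ x, g x = a • x) :
    g ∈ homotheties k V := by
  have ha : a ≠ 0 := by
    rintro rfl
    obtain ⟨x, hx⟩ := exists_ne (0 : V)
    exact hx (g.map_eq_zero_iff.1 (by simp [h]))
  exact ⟨Units.mk0 a ha, LinearEquiv.ext fun x => (h x).symm⟩

lemma isLine_smul_of_mem_similitudes (hg : g ∈ similitudes T) (hM : IsLine T M) :
    IsLine T (g • M) := by
  obtain ⟨c, -, hc⟩ := hg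
  exact hc.isLine_map g.injective hM

lemma smul_mem_linesMeeting (hg : g ∈ similitudes T) (hL : g • L = L)
    (hM : M ∈ linesMeeting T L) : g • M ∈ linesMeeting T L := by
  obtain ⟨hM, hne, hd⟩ := hM
  refine ⟨isLine_smul_of_mem_similitudes hg hM, fun h => hne ?_, fun h => hd ?_⟩
  · rw [← hL] at h
    exact smul_left_cancel g h
  · rw [← hL] at h
    exact (disjoint_map_orderIso_iff (Submodule.orderIsoMapComap g)).1 h

lemma IsResidualLine.sup_eq {z : V} (h : IsResidualLine T L z M) (hL : IsLine T L) :
    L ⊔ M = L ⊔ Submodule.span k {z} := by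
  refine le_antisymm (sup_le le_sup_left h.le) (sup_le le_sup_left ?_)
  obtain ⟨l, hl, hlz⟩ := h.exists_add_mem hL
  rw [Submodule.span_singleton_le_iff_mem, ← add_sub_cancel_left l z]
  exact sub_mem (Submodule.mem_sup_right hlz) (Submodule.mem_sup_left hl)

lemma IsTransverse.eq_of_isResidualLine {z₀ z₁ : V} (h : IsTransverse L z₀ z₁) (hL : IsLine T L)
    {s t : k} (hs : IsResidualLine T L (z₀ + s • z₁) M)
    (ht : IsResidualLine T L (z₀ + t • z₁) M) : s = t := by
  have hmem : z₀ + s • z₁ ∈ L ⊔ Submodule.span k {z₀ + t • z₁} := by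
    rw [← ht.sup_eq hL, hs.sup_eq hL]
    exact Submodule.mem_sup_right (Submodule.mem_span_singleton_self _)
  obtain ⟨l, hl, _, hz, hlz⟩ := Submodule.mem_sup.1 hmem
  obtain ⟨r, rfl⟩ := Submodule.mem_span_singleton.1 hz
  obtain ⟨h₀, h₁⟩ := h.indep (1 - r) (s - r * t) <| by
    convert hl using 1
    rw [eq_sub_of_add_eq hlz]
    module
  linear_combination h₁ - t * h₀

namespace TritangentPencil

/-- The similitudes which preserve the axis `L` of the pencil, and the line `left i` of its `i`-th
plane for each `i < n`. -/
def stabilizer (P : TritangentPencil T L) (n : ℕ) : Subgroup (V ≃ₗ[k] V) where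
  carrier := {g | g ∈ similitudes T ∧ g • L = L ∧ ∀ i : Fin 5, i < n → g • P.left i = P.left i}
  one_mem' := ⟨one_mem _, one_smul _ _, fun _ _ => one_smul _ _⟩
  mul_mem' := fun ⟨hg, hgL, hgm⟩ ⟨hh, hhL, hhm⟩ => ⟨mul_mem hg hh, by rw [mul_smul, hhL, hgL],
    fun i hi => by rw [mul_smul, hhm i hi, hgm i hi]⟩
  inv_mem' := fun ⟨hg, hgL, hgm⟩ => ⟨inv_mem hg, inv_smul_eq_iff.2 hgL.symm,
    fun i hi => inv_smul_eq_iff.2 (hgm i hi).symm⟩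

variable (P : TritangentPencil T L)

lemma stabilizer_inf_similitudes_le :
    MulAction.stabilizer (V ≃ₗ[k] V) L ⊓ similitudes T ≤ P.stabilizer 0 :=
  fun _ hg => ⟨hg.2, hg.1, fun _ hi => absurd hi (Nat.not_lt_zero _)⟩

lemma stabilizer_inf_stabilizer_le (n : Fin 5) :
    MulAction.stabilizer (V ≃ₗ[k] V) (P.left n) ⊓ P.stabilizer n ≤ P.stabilizer (n + 1) := by
  refine fun g ⟨hn, hg, hgL, hgm⟩ => ⟨hg, hgL, fun i hi => ?_⟩
  rcases Nat.lt_succ_iff_lt_or_eq.1 hi with hi | hi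
  · exact hgm i hi
  · rwa [Fin.val_injective hi]

variable {P}

lemma exists_isResidualLine_smul_left (hL : IsLine T L) {n : ℕ} (hg : g ∈ P.stabilizer n)
    (i : Fin 5) : ∃ j, IsResidualLine T L (P.z₀ + P.param j • P.z₁) (g • P.left i) := by
  obtain ⟨h, hne, hd⟩ :=
    smul_mem_linesMeeting hg.1 hg.2.1 ((P.isTritangent i).left.mem_linesMeeting hL)
  exact P.exists_isResidualLine _ h hne hd

-- `g` permutes the planes of the pencil and fixes those of index less than `n`.
lemma le_of_isResidualLine_smul_left (hL : IsLine T L) {n i : Fin 5} (hg : g ∈ P.stabilizer n)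
    (h : IsResidualLine T L (P.z₀ + P.param i • P.z₁) (g • P.left n)) : n ≤ i := by
  by_contra! hi
  have hfix : g • (L ⊔ P.left i) = L ⊔ P.left i := by
    rw [Submodule.smul_sup', hg.2.1, hg.2.2 i hi]
  have hle := h.le
  rw [← (P.isTritangent i).left.sup_eq hL, ← hfix] at hle
  have hle' : P.left n ≤ L ⊔ P.left i :=
    (Submodule.map_le_map_iff_of_injective g.injective _ _).1 hle
  rw [(P.isTritangent i).left.sup_eq hL] at hle'
  have hn := (P.isTritangent n).left
  exact hi.ne <| P.param_injective <|
    P.isTransverse.eq_of_isResidualLine hL ⟨hn.isLine, hn.ne, hle'⟩ hn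

lemma smul_left_mem [Infinite k] (hL : IsLine T L) {n : Fin 5} (hg : g ∈ P.stabilizer n) :
    g • P.left n ∈ P.left '' Set.Ici n ∪ P.right '' Set.Ici n := by
  obtain ⟨i, hi⟩ := exists_isResidualLine_smul_left hL hg n
  have hni := le_of_isResidualLine_smul_left hL hg hi
  exact ((P.isTritangent i).eq_or_eq hL hi).imp (fun h => ⟨i, hni, h.symm⟩)
    (fun h => ⟨i, hni, h.symm⟩)

lemma smul_left_three_mem [Infinite k] (hT : Smooth T) (hV : Module.finrank k V = 4)
    (hL : IsLine T L) (hg : g ∈ P.stabilizer 3) :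
    g • P.left 3 ∈ ({P.left 3, P.right 3} : Set (Submodule k V)) := by
  have hmem {M : Submodule k V} (hM : g • M = M) (x : V) (hx : x ∈ M) : g x ∈ M :=
    hM.le (Submodule.smul_mem_pointwise_smul x g M hx)
  have hinj : Function.Injective (Fin.castLE (by decide) : Fin 3 → Fin 5) :=
    Fin.castLE_injective _
  obtain ⟨a, b, h⟩ := exists_actsByScalars (g := (g : V →ₗ[k] V)) hT hL
    (finrank_quotient_eq_two hV hL) P.isTransverse (P.param_injective.comp hinj)
    (fun i => (P.isTritangent _).left) (hmem hg.2.1) (fun i => hmem (hg.2.2 _ i.2))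
  obtain ⟨hline, hne, -⟩ :=
    smul_mem_linesMeeting hg.1 hg.2.1 ((P.isTritangent 3).left.mem_linesMeeting hL)
  refine (P.isTritangent 3).eq_or_eq hL ⟨hline, hne, ?_⟩
  rintro _ ⟨x, hx, rfl⟩
  exact h.map_mem ((P.isTritangent 3).left.le hx)

lemma stabilizer_four_le_homotheties [Infinite k] (hT : Smooth T) (hV : Module.finrank k V = 4)
    (hL : IsLine T L) : P.stabilizer 4 ≤ homotheties k V := by
  have : Nontrivial V := Module.nontrivial_of_finrank_pos (R := k) (by lia)
  rintro g ⟨⟨c, hc, hg⟩, hgL, hgm⟩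
  have hmem {M : Submodule k V} (hM : g • M = M) (x : V) (hx : x ∈ M) : g x ∈ M :=
    hM.le (Submodule.smul_mem_pointwise_smul x g M hx)
  obtain ⟨a, ha⟩ := exists_forall_eq_smul_of_four_lines hT hL (finrank_quotient_eq_two hV hL) hg hc
    P.isTransverse (P.param_injective.comp (Fin.castSucc_injective 4))
    (fun i => (P.isTritangent _).left) (hmem hgL) (fun i => hmem (hgm _ i.2))
  exact mem_homotheties_of_forall_eq_smul ha

lemma encard_image_Ici_union_le {X : Type*} (f g : Fin 5 → X) (n : Fin 5) :
    (f '' Set.Ici n ∪ g '' Set.Ici n).encard ≤ (2 * (5 - n) : ℕ) := by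
  have hcard : (Set.Ici n).encard = (5 - n : ℕ) := by
    rw [← Finset.coe_Ici, Set.encard_coe_eq_coe_finsetCard, Fin.card_Ici]
  refine (Set.encard_union_le _ _).trans ?_
  rw [two_mul, Nat.cast_add, ← hcard]
  exact add_le_add (Set.encard_image_le ..) (Set.encard_image_le ..)

lemma relIndex_homotheties_stabilizer_mem_Icc [Infinite k] (hT : Smooth T)
    (hV : Module.finrank k V = 4) (hL : IsLine T L) :
    (homotheties k V).relIndex (P.stabilizer 0) ∈ Set.Icc 1 (10 * (8 * (6 * (2 * 1)))) := by
  have h₄ : (homotheties k V).relIndex (P.stabilizer 4) ∈ Set.Icc 1 1 := by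
    rw [Subgroup.relIndex_eq_one.2 (stabilizer_four_le_homotheties hT hV hL)]
    simp
  have h₃ := relIndex_mem_Icc_of_inf_stabilizer (a := 2)
    (Set.encard_pair (P.isTritangent 3).ne).le
    (fun g hg => smul_left_three_mem hT hV hL hg) (P.stabilizer_inf_stabilizer_le 3) h₄
  have hstep (n : Fin 5) {N : ℕ}
      (h : (homotheties k V).relIndex (P.stabilizer (n + 1)) ∈ Set.Icc 1 N) :=
    relIndex_mem_Icc_of_inf_stabilizer (encard_image_Ici_union_le P.left P.right n)
      (fun g hg => smul_left_mem hL hg) (P.stabilizer_inf_stabilizer_le n) h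
  exact hstep 0 (hstep 1 (hstep 2 h₃))

end TritangentPencil

theorem relIndex_homotheties_similitudes_mem_Icc [IsAlgClosed k] (hT : Smooth T)
    (hV : Module.finrank k V = 4) (hL : IsLine T L) :
    (homotheties k V).relIndex (similitudes T) ∈ Set.Icc 1 25920 := by
  obtain ⟨P⟩ := hT.nonempty_tritangentPencil hV hL
  exact relIndex_mem_Icc_of_inf_stabilizer (a := 27) (hT.encard_setOf_isLine_le hV)
    (fun g hg => isLine_smul_of_mem_similitudes hg hL) P.stabilizer_inf_similitudes_le
    (TritangentPencil.relIndex_homotheties_stabilizer_mem_Icc hT hV hL)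

end Stabilizer
section BinaryCoeffs

variable {k V : Type*} [CommRing k] [AddCommGroup V] [Module k V] {T : TrilinearForm k V} {p q : V}

/-- The coefficients of the binary cubic form `(s, t) ↦ cubic T (s • p + t • q)`. Their vanishing
says that the pair `p`, `q` spans a line on the surface, over any commutative ring. -/
def binaryCoeffs (T : TrilinearForm k V) (p q : V) : Fin 4 → k :=
  ![cubic T p, polar T p q, polar T q p, cubic T q]

lemma binaryCoeffs_add (S T : TrilinearForm k V) (p q : V) :
    binaryCoeffs (S + T) p q = binaryCoeffs S p q + binaryCoeffs T p q := by
  ext i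
  fin_cases i <;> simp [binaryCoeffs, cubic, polar_apply] <;> ring

lemma binaryCoeffs_smul (a : k) (T : TrilinearForm k V) (p q : V) :
    binaryCoeffs (a • T) p q = a • binaryCoeffs T p q := by
  ext i
  fin_cases i <;> simp [binaryCoeffs, cubic, polar_apply] <;> ring

lemma binaryCoeffs_eq_zero_iff : binaryCoeffs T p q = 0 ↔
    cubic T p = 0 ∧ polar T p q = 0 ∧ polar T q p = 0 ∧ cubic T q = 0 := by
  simp [binaryCoeffs, funext_iff, Fin.forall_fin_succ]

lemma cubic_combination_eq_zero (h : binaryCoeffs T p q = 0) (a b : k) :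
    cubic T (a • p + b • q) = 0 := by
  obtain ⟨hp, hpq, hqp, hq⟩ := binaryCoeffs_eq_zero_iff.1 h
  simp only [cubic_add, cubic_smul, polar_smul_left, map_smul, hp, hpq, hqp, hq, smul_zero,
    mul_zero, add_zero]

lemma polar_combination_eq_zero (h : binaryCoeffs T p q = 0) (a b c d : k) :
    polar T (a • p + b • q) (c • p + d • q) = 0 := by
  obtain ⟨hp, hpq, hqp, hq⟩ := binaryCoeffs_eq_zero_iff.1 h
  simp only [polar_add_left, polar_smul_left, map_add, map_smul, LinearMap.smul_apply, polar_self,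
    hessian_self_mid, hessian_self_right, hp, hpq, hqp, hq, smul_zero, mul_zero, add_zero]

lemma binaryCoeffs_combination_eq_zero (h : binaryCoeffs T p q = 0) (a b c d : k) :
    binaryCoeffs T (a • p + b • q) (c • p + d • q) = 0 :=
  binaryCoeffs_eq_zero_iff.2 ⟨cubic_combination_eq_zero h a b, polar_combination_eq_zero h a b c d,
    polar_combination_eq_zero h c d a b, cubic_combination_eq_zero h c d⟩

end BinaryCoeffs

section OfCoeffs

variable {A B σ : Type*} [CommRing A] [CommRing B] [Fintype σ]

/-- The trilinear form on `σ → A` with coefficients `c`. A ring homomorphism `φ` transports it by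
`φ ∘ c`, which is how cubic forms are moved between rings. -/
def ofCoeffs (c : σ × σ × σ → A) : TrilinearForm A (σ → A) :=
  ∑ m, (LinearMap.proj m.1).smulRight
    ((LinearMap.proj m.2.1).smulRight (c m • LinearMap.proj m.2.2))

lemma ofCoeffs_apply (c : σ × σ × σ → A) (x y z : σ → A) :
    ofCoeffs c x y z = ∑ m, c m * (x m.1 * y m.2.1 * z m.2.2) := by
  simp only [ofCoeffs, LinearMap.sum_apply, LinearMap.smulRight_apply, LinearMap.smul_apply,
    LinearMap.proj_apply, smul_eq_mul]
  exact Finset.sum_congr rfl fun _ _ => by ring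

lemma ofCoeffs_add (c d : σ × σ × σ → A) : ofCoeffs (c + d) = ofCoeffs c + ofCoeffs d :=
  LinearMap.ext fun _ => LinearMap.ext₂ fun _ _ => by
    simp only [ofCoeffs_apply, LinearMap.add_apply, Pi.add_apply, add_mul, Finset.sum_add_distrib]

lemma ofCoeffs_smul (a : A) (c : σ × σ × σ → A) : ofCoeffs (a • c) = a • ofCoeffs c :=
  LinearMap.ext fun _ => LinearMap.ext₂ fun _ _ => by
    simp only [ofCoeffs_apply, LinearMap.smul_apply, Pi.smul_apply, smul_eq_mul, Finset.mul_sum,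
      mul_assoc]

lemma map_ofCoeffs (φ : A →+* B) (c : σ × σ × σ → A) (x y z : σ → A) :
    φ (ofCoeffs c x y z) = ofCoeffs (φ ∘ c) (φ ∘ x) (φ ∘ y) (φ ∘ z) := by
  simp only [ofCoeffs_apply, map_sum, map_mul, Function.comp_apply]

lemma map_cubic (φ : A →+* B) (c : σ × σ × σ → A) (x : σ → A) :
    φ (cubic (ofCoeffs c) x) = cubic (ofCoeffs (φ ∘ c)) (φ ∘ x) :=
  map_ofCoeffs φ c x x x

lemma map_polar (φ : A →+* B) (c : σ × σ × σ → A) (x w : σ → A) :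
    φ (polar (ofCoeffs c) x w) = polar (ofCoeffs (φ ∘ c)) (φ ∘ x) (φ ∘ w) := by
  simp only [polar_apply, map_add, map_ofCoeffs]

lemma map_binaryCoeffs (φ : A →+* B) (c : σ × σ × σ → A) (x y : σ → A) :
    φ ∘ binaryCoeffs (ofCoeffs c) x y = binaryCoeffs (ofCoeffs (φ ∘ c)) (φ ∘ x) (φ ∘ y) := by
  simp only [binaryCoeffs, ← map_cubic, ← map_polar]
  exact funext fun i => by fin_cases i <;> rfl

/-- The pair `P`, `W` spans a line on the cubic surface with coefficients `c`, and is normalized by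
having the identity matrix in columns `i` and `j`. -/
structure IsEchelonLine (c : σ × σ × σ → A) (i j : σ) (P W : σ → A) : Prop where
  binaryCoeffs_eq_zero : binaryCoeffs (ofCoeffs c) P W = 0
  left_fst : P i = 1
  left_snd : P j = 0
  right_fst : W i = 0
  right_snd : W j = 1

variable {c : σ × σ × σ → A} {i j : σ} {P W : σ → A}

lemma IsEchelonLine.map (φ : A →+* B) (h : IsEchelonLine c i j P W) :
    IsEchelonLine (φ ∘ c) i j (φ ∘ P) (φ ∘ W) where
  binaryCoeffs_eq_zero := by
    rw [← map_binaryCoeffs, h.binaryCoeffs_eq_zero]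
    exact funext fun _ => map_zero φ
  left_fst := by rw [Function.comp_apply, h.left_fst, map_one]
  left_snd := by rw [Function.comp_apply, h.left_snd, map_zero]
  right_fst := by rw [Function.comp_apply, h.right_fst, map_zero]
  right_snd := by rw [Function.comp_apply, h.right_snd, map_one]

lemma IsEchelonLine.of_injective {φ : A →+* B} (hφ : Function.Injective φ)
    (h : IsEchelonLine (φ ∘ c) i j (φ ∘ P) (φ ∘ W)) : IsEchelonLine c i j P W where
  binaryCoeffs_eq_zero := hφ.comp_left <| (map_binaryCoeffs φ c P W).trans <|
    h.binaryCoeffs_eq_zero.trans <| funext fun _ => (map_zero φ).symm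
  left_fst := hφ <| by simpa only [Function.comp_apply, map_one] using h.left_fst
  left_snd := hφ <| by simpa only [Function.comp_apply, map_zero] using h.left_snd
  right_fst := hφ <| by simpa only [Function.comp_apply, map_zero] using h.right_fst
  right_snd := hφ <| by simpa only [Function.comp_apply, map_one] using h.right_snd

lemma IsEchelonLine.smul (a : A) (h : IsEchelonLine c i j P W) : IsEchelonLine (a • c) i j P W :=
  { h with
    binaryCoeffs_eq_zero := by
      rw [ofCoeffs_smul, binaryCoeffs_smul, h.binaryCoeffs_eq_zero, smul_zero] }

lemma IsEchelonLine.isLine_span {k : Type*} [Field k] {c : σ × σ × σ → k} {P W : σ → k}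
    (h : IsEchelonLine c i j P W) : IsLine (ofCoeffs c) (Submodule.span k {P, W}) := by
  refine ⟨?_, fun x hx => ?_⟩
  · have hli : LinearIndependent k ![P, W] := by
      rw [LinearIndependent.pair_iff]
      intro s t hst
      have hi := congrFun hst i
      have hj := congrFun hst j
      simp only [Pi.add_apply, Pi.smul_apply, h.left_fst, h.left_snd, h.right_fst, h.right_snd,
        smul_eq_mul, mul_one, mul_zero, add_zero, zero_add, Pi.zero_apply] at hi hj
      exact ⟨hi, hj⟩
    rw [← Matrix.range_cons_cons_empty, finrank_span_eq_card hli, Fintype.card_fin]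
  · obtain ⟨a, b, rfl⟩ := Submodule.mem_span_pair.1 hx
    exact cubic_combination_eq_zero h.binaryCoeffs_eq_zero a b

end OfCoeffs

section LineLifting

variable {R : Type*} [CommRing R] (I : Ideal R)

lemma exists_apply_eq_of_adic_contraction [IsAdicComplete I R] {ι : Type*} (f : (ι → R) → ι → R)
    (hf : ∀ n a b, (∀ i, a i - b i ∈ I ^ n) → ∀ i, f a i - f b i ∈ I ^ (n + 1)) :
    ∃ a, f a = a := by
  let s (n : ℕ) : ι → R := f^[n] 0
  have hs (n : ℕ) : s (n + 1) = f (s n) := Function.iterate_succ_apply' f n 0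
  have hsucc (n : ℕ) (i : ι) : s n i - s (n + 1) i ∈ I ^ n := by
    induction n generalizing i with
    | zero => simp
    | succ n ih => rw [hs n, hs (n + 1)]; exact hf n _ _ ih i
  have hcauchy {m n : ℕ} (h : m ≤ n) (i : ι) : s m i - s n i ∈ I ^ m := by
    induction n, h using Nat.le_induction with
    | base => simp
    | succ n hn ih =>
      rw [← sub_add_sub_cancel (s m i) (s n i)]
      exact add_mem ih (Ideal.pow_le_pow_right hn (hsucc n i))
  have hlim (i : ι) : ∃ a, ∀ n, s n i - a ∈ I ^ n := by
    simpa [SModEq.sub_mem] using IsPrecomplete.prec (I := I) inferInstance (f := fun n => s n i)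
      fun h => by simpa [SModEq.sub_mem] using hcauchy h i
  choose a ha using hlim
  refine ⟨a, funext fun i => sub_eq_zero.1 <| IsHausdorff.haus (I := I) inferInstance _ fun n => ?_⟩
  rw [SModEq.sub_mem, sub_zero, smul_eq_mul, Ideal.mul_top,
    ← sub_sub_sub_cancel_left (a i) (f a i) (s (n + 1) i)]
  refine Ideal.pow_le_pow_right n.le_succ (sub_mem (ha i _) ?_)
  rw [hs]
  exact hf n _ _ (fun j => ha j n) i

variable {I} {σ : Type*} [Fintype σ] {x y : σ → R}

lemma binaryCoeffs_sub_binaryCoeffs_mem (c : σ × σ × σ → R) {v w : σ → R} (h : ∀ i, x i - y i ∈ I)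
    (h' : ∀ i, v i - w i ∈ I) (j : Fin 4) :
    binaryCoeffs (ofCoeffs c) x v j - binaryCoeffs (ofCoeffs c) y w j ∈ I := by
  have hxy : Ideal.Quotient.mk I ∘ x = Ideal.Quotient.mk I ∘ y :=
    funext fun i => Ideal.Quotient.mk_eq_mk_iff_sub_mem _ _ |>.2 (h i)
  have hvw : Ideal.Quotient.mk I ∘ v = Ideal.Quotient.mk I ∘ w :=
    funext fun i => Ideal.Quotient.mk_eq_mk_iff_sub_mem _ _ |>.2 (h' i)
  rw [← Ideal.Quotient.mk_eq_mk_iff_sub_mem]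
  refine congrFun (?_ : Ideal.Quotient.mk I ∘ binaryCoeffs _ x v =
    Ideal.Quotient.mk I ∘ binaryCoeffs _ y w) j
  rw [map_binaryCoeffs, map_binaryCoeffs, hxy, hvw]

/-- The coefficients of `x₂x₀² + x₃x₁²`. -/
def seedCoeffs (R : Type*) [CommRing R] : Fin 4 × Fin 4 × Fin 4 → R :=
  Pi.single (2, 0, 0) 1 + Pi.single (3, 1, 1) 1

lemma ofCoeffs_seedCoeffs (x y z : Fin 4 → R) :
    ofCoeffs (seedCoeffs R) x y z = x 2 * y 0 * z 0 + x 3 * y 1 * z 1 := by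
  simp [ofCoeffs_apply, seedCoeffs, add_mul, Finset.sum_add_distrib, Pi.single_apply, mul_assoc]

lemma binaryCoeffs_seedCoeffs (a : Fin 4 → R) :
    binaryCoeffs (ofCoeffs (seedCoeffs R)) ![1, 0, a 0, a 2] ![0, 1, a 1, a 3] = a := by
  ext i
  fin_cases i <;> simp [binaryCoeffs, cubic, polar_apply, ofCoeffs_seedCoeffs]

theorem exists_isEchelonLine_seedCoeffs_add_smul [IsAdicComplete I R] {t : R} (ht : t ∈ I)
    (c : Fin 4 × Fin 4 × Fin 4 → R) : ∃ P W, IsEchelonLine (seedCoeffs R + t • c) 0 1 P W := by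
  let q (a : Fin 4 → R) := binaryCoeffs (ofCoeffs c) ![1, 0, a 0, a 2] ![0, 1, a 1, a 3]
  have hq (J : Ideal R) (a b : Fin 4 → R) (h : ∀ i, a i - b i ∈ J) (i) : q a i - q b i ∈ J := by
    refine binaryCoeffs_sub_binaryCoeffs_mem c (fun j => ?_) (fun j => ?_) i <;>
      fin_cases j <;> simp [h]
  have hcontr (n) (a b : Fin 4 → R) (h : ∀ i, a i - b i ∈ I ^ n) (i) :
      (-t • q a) i - (-t • q b) i ∈ I ^ (n + 1) := by
    rw [Pi.smul_apply, Pi.smul_apply, ← smul_sub, pow_succ']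
    exact Ideal.mul_mem_mul (neg_mem ht) (hq _ a b h i)
  obtain ⟨a, ha⟩ := exists_apply_eq_of_adic_contraction I (fun a => -t • q a) hcontr
  refine ⟨![1, 0, a 0, a 2], ![0, 1, a 1, a 3], ?_, rfl, rfl, rfl, rfl⟩
  rw [ofCoeffs_add, ofCoeffs_smul, binaryCoeffs_add, binaryCoeffs_smul, binaryCoeffs_seedCoeffs]
  nth_rw 1 [← ha]
  rw [neg_smul, neg_add_cancel]

end LineLifting

section LineSpecialization

lemma exists_valuationSubring_of_not_isIntegral (k : Type*) {K : Type*} [CommRing k] [Field K]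
    [Algebra k K] {x : K} (hx : ¬IsIntegral k x) :
    ∃ O : ValuationSubring K, (∀ r : k, algebraMap k K r ∈ O) ∧ x ∉ O := by
  obtain ⟨O, hO, hxO⟩ := Subring.exists_le_valuationSubring_of_isIntegrallyClosedIn
    (R := (integralClosure k K).toSubring) (x := x) hx
  exact ⟨O, fun r => hO ((integralClosure k K).algebraMap_mem r), hxO⟩

-- Dividing by a `2 × 2` minor of maximal valuation makes all Plücker coordinates integral.
theorem IsEchelonLine.exists_valuationSubring {K σ : Type*} [Field K] [Fintype σ]
    {O : ValuationSubring K} {c : σ × σ × σ → O} {i j : σ} {P W : σ → K}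
    (h : IsEchelonLine (O.subtype ∘ c) i j P W) :
    ∃ i j P W, IsEchelonLine (A := O) c i j P W := by
  let minor (m : σ × σ) : K := P m.1 * W m.2 - P m.2 * W m.1
  obtain ⟨⟨a, b⟩, -, hmax⟩ := Finset.exists_max_image Finset.univ (fun m => O.valuation (minor m))
    ⟨(i, j), Finset.mem_univ _⟩
  have hone : minor (i, j) = 1 := by
    simp [minor, h.left_fst, h.left_snd, h.right_fst, h.right_snd]
  have hne : minor (a, b) ≠ 0 := fun h0 => by
    simpa [h0, hone] using hmax (i, j) (Finset.mem_univ _)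
  have hmem (m) : minor m / minor (a, b) ∈ O := by
    rw [← O.valuation_le_one_iff, map_div₀]
    exact div_le_one_of_le₀ (hmax m (Finset.mem_univ _)) zero_le
  let P' (l : σ) : O := ⟨_, hmem (l, b)⟩
  let W' (l : σ) : O := ⟨_, hmem (a, l)⟩
  have hP' : O.subtype ∘ P' = (W b / minor (a, b)) • P + (-P b / minor (a, b)) • W := by
    ext l
    change minor (l, b) / minor (a, b) = W b / minor (a, b) * P l + -P b / minor (a, b) * W l
    ring
  have hW' : O.subtype ∘ W' = (-W a / minor (a, b)) • P + (P a / minor (a, b)) • W := by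
    ext l
    change minor (a, l) / minor (a, b) = -W a / minor (a, b) * P l + P a / minor (a, b) * W l
    ring
  refine ⟨a, b, P', W', .of_injective O.subtype_injective ⟨?_, ?_, ?_, ?_, ?_⟩⟩
  · rw [hP', hW']
    exact binaryCoeffs_combination_eq_zero h.binaryCoeffs_eq_zero _ _ _ _
  · exact div_self hne
  · change minor (b, b) / minor (a, b) = 0
    simp [minor]
  · change minor (a, a) / minor (a, b) = 0
    simp [minor]
  · exact div_self hne

lemma not_isIntegral_powerSeries_X (k : Type*) [CommRing k] [Nontrivial k] :
    ¬IsIntegral k (PowerSeries.X : PowerSeries k) := by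
  rintro ⟨p, hp, h⟩
  rw [PowerSeries.algebraMap_eq, Polynomial.eval₂_C_X_eq_coe] at h
  exact hp.ne_zero (Polynomial.coe_injective k (h.trans Polynomial.coe_zero.symm))

lemma nonempty_algHom_of_finiteType (k R : Type*) [Field k] [IsAlgClosed k] [CommRing R]
    [Nontrivial R] [Algebra k R] [Algebra.FiniteType k R] : Nonempty (R →ₐ[k] k) := by
  obtain ⟨m, hm⟩ := Ideal.exists_maximal R
  let _ := Ideal.Quotient.field m
  have := finite_of_finite_type_of_isJacobsonRing k (R ⧸ m)
  exact ⟨(IsAlgClosed.lift (R := k) (S := R ⧸ m) (M := k)).comp (Ideal.Quotient.mkₐ k m)⟩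

theorem IsEchelonLine.descend {k κ σ : Type*} [Field k] [IsAlgClosed k] [CommRing κ] [Nontrivial κ]
    [Algebra k κ] [Fintype σ] {c : σ × σ × σ → k} {i j : σ} {P W : σ → κ}
    (h : IsEchelonLine (algebraMap k κ ∘ c) i j P W) :
    ∃ P W, IsEchelonLine c i j P W := by
  let R := Algebra.adjoin k (Set.range P ∪ Set.range W)
  have : Algebra.FiniteType k R := (Subalgebra.fg_iff_finiteType _).1 <|
    Subalgebra.fg_def.2 ⟨_, (Set.finite_range P).union (Set.finite_range W), rfl⟩
  let P' (l : σ) : R := ⟨P l, Algebra.subset_adjoin (.inl ⟨l, rfl⟩)⟩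
  let W' (l : σ) : R := ⟨W l, Algebra.subset_adjoin (.inr ⟨l, rfl⟩)⟩
  have hR : IsEchelonLine (algebraMap k R ∘ c) i j P' W' :=
    .of_injective (φ := R.val.toRingHom) Subtype.val_injective h
  obtain ⟨f⟩ := nonempty_algHom_of_finiteType k R
  have hk := hR.map f.toRingHom
  have hf : f.toRingHom ∘ algebraMap k R ∘ c = c := funext fun m => f.commutes (c m)
  exact ⟨_, _, hf ▸ hk⟩

lemma map_seedCoeffs {A B : Type*} [CommRing A] [CommRing B] (φ : A →+* B)
    (m : Fin 4 × Fin 4 × Fin 4) : φ (seedCoeffs A m) = seedCoeffs B m := by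
  simp [seedCoeffs, Pi.single_apply, apply_ite φ]

theorem exists_isEchelonLine_fractionRing {k : Type*} [Field k] (c : Fin 4 × Fin 4 × Fin 4 → k) :
    ∃ (x : FractionRing (PowerSeries k)) (P W : Fin 4 → FractionRing (PowerSeries k)),
      ¬IsIntegral k x ∧ IsEchelonLine (x⁻¹ • seedCoeffs _ + algebraMap k _ ∘ c) 0 1 P W := by
  let φ := algebraMap (PowerSeries k) (FractionRing (PowerSeries k))
  have hφ : Function.Injective φ := IsFractionRing.injective _ _
  have hX : φ PowerSeries.X ≠ 0 := (map_ne_zero_iff φ hφ).2 PowerSeries.X_ne_zero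
  obtain ⟨P, W, h⟩ := exists_isEchelonLine_seedCoeffs_add_smul (Ideal.mem_span_singleton_self
    (PowerSeries.X : PowerSeries k)) (algebraMap k (PowerSeries k) ∘ c)
  refine ⟨φ PowerSeries.X, φ ∘ P, φ ∘ W, ?_, ?_⟩
  · exact (isIntegral_algebraMap_iff hφ).not.2 (not_isIntegral_powerSeries_X k)
  · convert (h.map φ).smul (φ PowerSeries.X)⁻¹ using 1
    ext m
    simp [map_seedCoeffs, mul_add, hX, φ, IsScalarTower.algebraMap_apply k (PowerSeries k)]

theorem exists_isEchelonLine {k : Type*} [Field k] [IsAlgClosed k]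
    (c : Fin 4 × Fin 4 × Fin 4 → k) : ∃ i j P W, IsEchelonLine c i j P W := by
  obtain ⟨x, P, W, hx, h⟩ := exists_isEchelonLine_fractionRing c
  obtain ⟨O, hkO, hxO⟩ := exists_valuationSubring_of_not_isIntegral k hx
  let ι : k →+* O := (algebraMap k _).codRestrict O.toSubring hkO
  let ε : O := ⟨x⁻¹, (O.mem_or_inv_mem x).resolve_left hxO⟩
  have hε : IsLocalRing.residue O ε = 0 :=
    (IsLocalRing.residue_eq_zero_iff _).2 <| ValuationSubring.coe_mem_nonunits_iff.1 <|
      (O.inv_mem_nonunits_iff).2 (.inr hxO)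
  have hK : O.subtype ∘ (ε • seedCoeffs O + ι ∘ c) = x⁻¹ • seedCoeffs _ + algebraMap k _ ∘ c := by
    ext m
    simp [← map_seedCoeffs O.subtype, ι, ε]
  let _ := ((IsLocalRing.residue O).comp ι).toAlgebra
  have hκ : IsLocalRing.residue O ∘ (ε • seedCoeffs O + ι ∘ c) = algebraMap k _ ∘ c := by
    ext m
    simp [hε, RingHom.algebraMap_toAlgebra]
  obtain ⟨i, j, P', W', h'⟩ := IsEchelonLine.exists_valuationSubring (hK.symm ▸ h)
  exact ⟨i, j, IsEchelonLine.descend (hκ ▸ h'.map (IsLocalRing.residue O))⟩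

theorem exists_isLine {k : Type*} [Field k] [IsAlgClosed k] (c : Fin 4 × Fin 4 × Fin 4 → k) :
    ∃ L, IsLine (ofCoeffs c) L :=
  let ⟨_, _, _, _, h⟩ := exists_isEchelonLine c
  ⟨_, h.isLine_span⟩

end LineSpecialization

section Polynomial

variable {σ k : Type*} [CommRing k]

/-- The cubic polynomial with coefficients `c`. Repeated and permuted monomials make `c` non-unique,
which costs nothing and avoids an ordering of the variables. -/
noncomputable def cubicPolynomial [Fintype σ] (c : σ × σ × σ → k) : MvPolynomial σ k :=
  ∑ m, C (c m) * (X m.1 * X m.2.1 * X m.2.2)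

lemma exists_eq_X_mul_X_mul_X {d : σ →₀ ℕ} (hd : d.degree = 3) :
    ∃ a b e : σ, (monomial d 1 : MvPolynomial σ k) = X a * X b * X e := by
  classical
  obtain ⟨a, b, e, h⟩ := Multiset.card_eq_three.1 ((Finsupp.card_toMultiset d).trans hd)
  have hsum : d = Finsupp.single a 1 + Finsupp.single b 1 + Finsupp.single e 1 := by
    refine Multiset.toFinsupp.symm.injective (h.trans ?_)
    change _ = Finsupp.toMultiset _
    simp [Finsupp.toMultiset_single]
  exact ⟨a, b, e, by rw [hsum, X, X, X, monomial_mul, monomial_mul, mul_one, mul_one]⟩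

lemma exists_eq_cubicPolynomial [Fintype σ] {F : MvPolynomial σ k} (hF : F.IsHomogeneous 3) :
    ∃ c, F = cubicPolynomial c := by
  classical
  rw [F.as_sum]
  refine Finset.sum_induction _ (fun G => ∃ c, G = cubicPolynomial c) ?_ ?_ fun d hd => ?_
  · rintro _ _ ⟨c, rfl⟩ ⟨c', rfl⟩
    exact ⟨c + c', by
      simp only [cubicPolynomial, ← Finset.sum_add_distrib, Pi.add_apply, map_add, add_mul]⟩
  · exact ⟨0, by simp [cubicPolynomial]⟩
  · have hdeg : d.degree = 3 := by
      rw [Finsupp.degree_eq_weight_one]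
      exact hF (mem_support_iff.1 hd)
    obtain ⟨a, b, e, h⟩ := exists_eq_X_mul_X_mul_X (k := k) hdeg
    refine ⟨Pi.single (a, b, e) (coeff d F), ?_⟩
    rw [← mul_one (coeff d F), ← C_mul_monomial, h, cubicPolynomial,
      Finset.sum_eq_single (a, b, e) (fun m _ hm => by simp [Pi.single_eq_of_ne hm]) (by simp)]
    simp

lemma eval_cubicPolynomial [Fintype σ] (c : σ × σ × σ → k) (x : σ → k) :
    eval x (cubicPolynomial c) = cubic (ofCoeffs c) x := by
  simp [cubicPolynomial, cubic, ofCoeffs_apply]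

lemma eval_pderiv_cubicPolynomial [Fintype σ] [DecidableEq σ] (c : σ × σ × σ → k) (x : σ → k)
    (i : σ) : eval x (pderiv i (cubicPolynomial c)) = polar (ofCoeffs c) x (Pi.single i 1) := by
  have heval (j : σ) :
      eval x (pderiv i (X j : MvPolynomial σ k)) = (Pi.single i 1 : σ → k) j := by
    rw [pderiv_X]
    simp only [Pi.single_apply, eq_comm (a := j)]
    split_ifs <;> simp
  simp only [cubicPolynomial, polar_apply, ofCoeffs_apply, map_sum, ← Finset.sum_add_distrib,
    pderiv_mul, pderiv_C, map_add, map_mul, map_zero, eval_C, eval_X, heval]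
  exact Finset.sum_congr rfl fun _ _ => by ring

lemma smooth_ofCoeffs [Fintype σ] {c : σ × σ × σ → k} (h : ∀ x : σ → k,
    eval x (cubicPolynomial c) = 0 → (∀ i, eval x (pderiv i (cubicPolynomial c)) = 0) → x = 0) :
    Smooth (ofCoeffs c) := by
  classical
  intro x hx hd
  refine h x ((eval_cubicPolynomial c x).trans hx) fun i => ?_
  rw [eval_pderiv_cubicPolynomial, hd, LinearMap.zero_apply]

end Polynomial

section ProjectiveLinear

lemma ncard_image_mk {G : Type*} [Group G] (S H : Subgroup G) :
    ((QuotientGroup.mk : G → G ⧸ S) '' H).ncard = S.relIndex H := by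
  have hsmul (g : H) : g • ((1 : G) : G ⧸ S) = ((g : G) : G ⧸ S) :=
    congrArg QuotientGroup.mk (mul_one (g : G))
  have horbit : (QuotientGroup.mk : G → G ⧸ S) '' H = MulAction.orbit H ((1 : G) : G ⧸ S) := by
    ext x
    simp [MulAction.mem_orbit_iff, hsmul]
  have hstab : MulAction.stabilizer H ((1 : G) : G ⧸ S) = S.subgroupOf H := by
    ext g
    rw [MulAction.mem_stabilizer_iff, hsmul, eq_comm, QuotientGroup.eq, inv_one, one_mul,
      Subgroup.mem_subgroupOf]
  rw [horbit, ← MulAction.index_stabilizer, hstab, Subgroup.relIndex]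

variable {k : Type*} [Field k]

/-- The identification of invertible matrices with linear automorphisms of `k⁴`. -/
noncomputable def generalLinearEquivAut (k : Type*) [Field k] :
    GL (Fin 4) k ≃* ((Fin 4 → k) ≃ₗ[k] (Fin 4 → k)) :=
  Matrix.GeneralLinearGroup.toLin.trans
    (LinearMap.GeneralLinearGroup.generalLinearEquiv k (Fin 4 → k))

lemma generalLinearEquivAut_apply (A : GL (Fin 4) k) (x : Fin 4 → k) :
    generalLinearEquivAut k A x = (A : Matrix (Fin 4) (Fin 4) k) *ᵥ x := rfl

lemma comap_homotheties :
    (homotheties k (Fin 4 → k)).comap (generalLinearEquivAut k).toMonoidHom =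
      scalarSubgroup k := by
  ext A
  simp only [Subgroup.mem_comap, homotheties, scalarSubgroup, MonoidHom.mem_range]
  refine exists_congr fun a => ?_
  rw [← (generalLinearEquivAut k).injective.eq_iff]
  refine iff_of_eq (congrArg (· = _) (LinearEquiv.ext fun x => ?_))
  simp [generalLinearEquivAut_apply, Algebra.algebraMap_eq_smul_one, Matrix.smul_mulVec,
    Units.smul_def]

lemma eval_substMatrix (A : Matrix (Fin 4) (Fin 4) k) (F : MvPolynomial (Fin 4) k)
    (x : Fin 4 → k) : eval x (substMatrix A F) = eval (A *ᵥ x) F := by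
  rw [substMatrix, aeval_def, eval₂_eq_eval_map, ← coe_aeval_eq_eval]
  induction F using MvPolynomial.induction_on with
  | C c => simp
  | add p q hp hq => simp only [map_add] at *; rw [hp, hq]
  | mul_X p i hp =>
    simp only [map_mul] at *
    rw [hp]
    simp [Matrix.mulVec, dotProduct]

lemma leavesInvariant_iff [Infinite k] (A : Matrix (Fin 4) (Fin 4) k)
    (F : MvPolynomial (Fin 4) k) :
    LeavesInvariant A F ↔ ∃ a ≠ 0, ∀ x, eval (A *ᵥ x) F = a * eval x F := by
  constructor
  · rintro ⟨a, h⟩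
    exact ⟨a, a.ne_zero, fun x => by rw [← eval_substMatrix, h, smul_eval]⟩
  · rintro ⟨a, ha, h⟩
    refine ⟨Units.mk0 a ha, MvPolynomial.funext fun x => ?_⟩
    rw [eval_substMatrix, h, smul_eval, Units.val_mk0]

lemma coe_comap_similitudes [Infinite k] (c : Fin 4 × Fin 4 × Fin 4 → k) :
    ((similitudes (ofCoeffs c)).comap (generalLinearEquivAut k).toMonoidHom : Set (GL (Fin 4) k)) =
      {A : GL (Fin 4) k | LeavesInvariant (A : Matrix (Fin 4) (Fin 4) k) (cubicPolynomial c)} := by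
  ext A
  simp only [Set.mem_ofPred_eq, leavesInvariant_iff, eval_cubicPolynomial]
  rfl

end ProjectiveLinear

end CubicSurface

open CubicSurface

/-- The stabilizer of a smooth cubic surface in `PGL₄(k)` is a
finite group of cardinality at most `25920`. -/
theorem stmt0 {k : Type*} [Field k] [IsAlgClosed k]
    (F : MvPolynomial (Fin 4) k) (hF0 : F ≠ 0) (hhom : F.IsHomogeneous 3)
    (hsmooth : ∀ x : Fin 4 → k,
      eval x F = 0 → (∀ i, eval x (pderiv i F) = 0) → x = 0) :
    ((QuotientGroup.mk :
        GL (Fin 4) k → GL (Fin 4) k ⧸ scalarSubgroup k) ''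
        {A : GL (Fin 4) k | LeavesInvariant (A : Matrix (Fin 4) (Fin 4) k) F}).Finite ∧
    ((QuotientGroup.mk :
        GL (Fin 4) k → GL (Fin 4) k ⧸ scalarSubgroup k) ''
        {A : GL (Fin 4) k | LeavesInvariant (A : Matrix (Fin 4) (Fin 4) k) F}).ncard
      ≤ 25920 := by
  have : Infinite k := IsAlgClosed.instInfinite
  obtain ⟨c, rfl⟩ := exists_eq_cubicPolynomial hhom
  obtain ⟨L, hL⟩ := exists_isLine c
  obtain ⟨hpos, hle⟩ := relIndex_homotheties_similitudes_mem_Icc (smooth_ofCoeffs hsmooth)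
    (Module.finrank_fin_fun k) hL
  have hcard := ncard_image_mk (scalarSubgroup k)
    ((similitudes (ofCoeffs c)).comap (generalLinearEquivAut k).toMonoidHom)
  rw [coe_comap_similitudes, ← comap_homotheties, Subgroup.relIndex_comap,
    Subgroup.map_comap_eq_self_of_surjective (generalLinearEquivAut k).surjective] at hcard
  rw [← comap_homotheties]
  exact ⟨Set.finite_of_ncard_pos (hcard ▸ hpos), hcard ▸ hle⟩
end

section
/- Let F be a nonzero homogeneous polynomial of degree 3 in k[x₀,x₁,x₂,x₃] such that the cubic surface V(F) is smooth, and let p be a point of ℙ³(k). Then p is an Eckardt point of V(F) if and only if there exists a reflection A ∈ GL₄(k) leaving V(F) invariant whose center is p. -/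
open MvPolynomial Matrix

/-- `F` vanishes identically on the linear subspace `W ⊆ k⁴`. -/
def VanishesOn {k : Type*} [Field k] (F : MvPolynomial (Fin 4) k)
    (W : Submodule k (Fin 4 → k)) : Prop :=
  ∀ x ∈ W, eval x F = 0

/-- `W` is (the cone over) a projective line contained in the surface `V(F)`. -/
def IsLineIn {k : Type*} [Field k] (F : MvPolynomial (Fin 4) k)
    (W : Submodule k (Fin 4 → k)) : Prop :=
  Module.finrank k W = 2 ∧ VanishesOn F W

/-- `L`, a 1-dimensional subspace of `k⁴` regarded as a point of `ℙ³(k)`, is an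
Eckardt point of `V(F)`: at least three distinct projective lines contained in
`V(F)` pass through it. -/
def IsEckardtPoint {k : Type*} [Field k] (F : MvPolynomial (Fin 4) k)
    (L : Submodule k (Fin 4 → k)) : Prop :=
  Module.finrank k L = 1 ∧
    ∃ W₁ W₂ W₃ : Submodule k (Fin 4 → k),
      W₁ ≠ W₂ ∧ W₁ ≠ W₃ ∧ W₂ ≠ W₃ ∧
      IsLineIn F W₁ ∧ IsLineIn F W₂ ∧ IsLineIn F W₃ ∧
      L ≤ W₁ ∧ L ≤ W₂ ∧ L ≤ W₃

/-!
Let `T_v` be the tangent plane and `Q_v` the polar quadric of a point `v` of the surface, that is,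
`Q_v(x)` is the derivative of `F` at `x` in the direction `v`. Both conditions on `v` mean that
`Q_v` is the union of `T_v` and another plane `f = 0`.

Lines through `v` lie in `T_v` and in `Q_v`. Three of them are spanned with `v` by some `a`, `b` and
`a + b`, which forces `Q_v` to vanish on all of `T_v`. Conversely, if `Q_v` contains `T_v`, then
`T_v` cuts the surface in a cone over a binary cubic, whose roots are distinct by smoothness.

A reflection with center `v` is `x ↦ x - f(x)v` with `f(v) = 2`. It multiplies `F` by a scalar that
must be `1`, as a smooth surface does not contain the plane `f = 0`, and comparing `F(x - f(x)v)`
with `F(x)` shows that `Q_v` is the product of `f` and the equation of `T_v`. In the other direction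
`f(v) = 2` is automatic. What remains is to exclude `f = 0`, possible only in characteristic two,
where it would produce a singular point.
-/

open Module Submodule

section AlgClosed

variable {k : Type*} [Field k]

lemma cubic_coeffs_eq_zero [Infinite k] {a b c d : k}
    (h : ∀ t, a * t ^ 3 + b * t ^ 2 + c * t + d = 0) : a = 0 ∧ b = 0 ∧ c = 0 ∧ d = 0 := by
  have hP : (Cubic.mk a b c d).toPoly = 0 :=
    Polynomial.funext fun t => by simpa [Cubic.toPoly] using h t
  exact Cubic.ext_iff.1 ((Cubic.toPoly_eq_zero_iff _).1 hP)

variable [IsAlgClosed k]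

lemma exists_quadratic_eq_zero_of_isAlgClosed {a : k} (ha : a ≠ 0) (b c : k) :
    ∃ t, a * t ^ 2 + b * t + c = 0 := by
  obtain ⟨t, ht⟩ := IsAlgClosed.exists_root (.C a * .X ^ 2 + .C b * .X + .C c : Polynomial k)
    (by rw [Polynomial.degree_quadratic ha]; norm_num)
  exact ⟨t, by simpa using ht⟩

lemma exists_cubic_eq_zero_of_isAlgClosed {a : k} (ha : a ≠ 0) (b c d : k) :
    ∃ t, a * t ^ 3 + b * t ^ 2 + c * t + d = 0 := by
  obtain ⟨t, ht⟩ := IsAlgClosed.exists_root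
    (.C a * .X ^ 3 + .C b * .X ^ 2 + .C c * .X + .C d : Polynomial k)
    (by rw [Polynomial.degree_cubic ha]; norm_num)
  exact ⟨t, by simpa using ht⟩

end AlgClosed

section LinearAlgebra

variable {k V : Type*} [Field k] [AddCommGroup V] [Module k V]

lemma dual_eq_zero_of_ker_le {f g : Dual k V} {e : V} (hker : LinearMap.ker f ≤ LinearMap.ker g)
    (hf : f e ≠ 0) (hg : g e = 0) : g = 0 := by
  ext y
  have hy : y - (f y / f e) • e ∈ LinearMap.ker f := by simp [hf]
  simpa [hg] using hker hy

lemma quadraticForm_eq_linMulLin_of_ker {Q : QuadraticForm k V} {l : Dual k V} (hl : l ≠ 0)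
    (hQ : ∀ x, l x = 0 → Q x = 0) : ∃ f : Dual k V, Q = QuadraticMap.linMulLin f l := by
  obtain ⟨e, he⟩ := LinearMap.surjective hl 1
  refine ⟨Q.polarBilin e - Q e • l, QuadraticMap.ext fun x => ?_⟩
  obtain ⟨h, hh, hx⟩ : ∃ h, l h = 0 ∧ x = h + l x • e := ⟨x - l x • e, by simp [he], by simp⟩
  have hpolar : QuadraticMap.polar Q e x = QuadraticMap.polar Q e h + l x * (2 * Q e) := by
    conv_lhs => rw [hx]
    simp [QuadraticMap.polar_self]
  have hQx : Q x = l x * QuadraticMap.polar Q e h + l x ^ 2 * Q e := by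
    conv_lhs => rw [hx]
    rw [QuadraticMap.map_add Q, hQ h hh, QuadraticMap.map_smul, QuadraticMap.polar_smul_right,
      QuadraticMap.polar_comm, smul_eq_mul, smul_eq_mul]
    ring
  simp only [QuadraticMap.linMulLin_apply, LinearMap.sub_apply, LinearMap.smul_apply,
    QuadraticMap.polarBilin_apply_apply, smul_eq_mul]
  rw [hQx, hpolar]
  ring

lemma quadraticForm_eq_zero_of_mul_eq_zero [Infinite k] {Q : QuadraticForm k V} {l : Dual k V}
    (hl : l ≠ 0) (h : ∀ x, l x * Q x = 0) : Q = 0 := by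
  obtain ⟨e, he⟩ := LinearMap.surjective hl 1
  ext x
  by_cases hx : l x = 0
  · refine (cubic_coeffs_eq_zero (a := Q e) (b := QuadraticMap.polar Q x e) (d := 0)
      fun t => ?_).2.2.1
    have ht := h (x + t • e)
    rw [map_add, map_smul, hx, he, QuadraticMap.map_add Q, QuadraticMap.map_smul,
      QuadraticMap.polar_smul_right] at ht
    simp only [smul_eq_mul] at ht
    linear_combination ht
  · exact (mul_eq_zero.1 (h x)).resolve_left hx

lemma exists_mem_ne_zero_eq_zero_of_one_lt_finrank {g : V → k}
    (hg : ∀ a b, g a ≠ 0 → ∃ t : k, g (b + t • a) = 0) {U : Submodule k V}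
    (hU : 1 < finrank k U) : ∃ x ∈ U, x ≠ 0 ∧ g x = 0 := by
  have : Nontrivial U := nontrivial_of_finrank_pos (R := k) (by lia)
  obtain ⟨a, ha⟩ := exists_ne (0 : U)
  by_cases hga : g a = 0
  · exact ⟨a, a.2, by simpa using ha, hga⟩
  · obtain ⟨b, hab⟩ := exists_linearIndependent_pair_of_one_lt_finrank hU ha
    obtain ⟨t, ht⟩ := hg a b hga
    refine ⟨b + t • a, U.add_mem b.2 (U.smul_mem t a.2), fun h => ?_, ht⟩
    have := LinearIndependent.pair_iff.1 hab t 1 (Subtype.ext (by simpa [add_comm] using h))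
    exact one_ne_zero this.2

variable [FiniteDimensional k V]

lemma finrank_span_lt_finrank_span_insert {s : Set V} {x : V} (hx : x ∉ span k s) :
    finrank k (span k s) < finrank k (span k (insert x s)) :=
  finrank_lt_finrank_of_lt <| lt_of_le_of_ne (span_mono (Set.subset_insert x s)) fun h =>
    hx (h ▸ subset_span (Set.mem_insert x s))

lemma span_pair_eq_of_finrank_eq_two {W : Submodule k V} (hW : finrank k W = 2) {v a : V}
    (hv : v ≠ 0) (hvW : v ∈ W) (haW : a ∈ W) (ha : a ∉ span k {v}) : span k {a, v} = W := by
  have hlt := finrank_span_lt_finrank_span_insert ha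
  rw [finrank_span_singleton hv] at hlt
  refine eq_of_le_of_finrank_le (span_le.2 ?_) (by lia)
  simp [Set.insert_subset_iff, hvW, haW]

lemma span_triple_eq_of_finrank_eq_three {W : Submodule k V} (hW : finrank k W = 3) {v a b : V}
    (hv : v ≠ 0) (hvW : v ∈ W) (haW : a ∈ W) (hbW : b ∈ W) (ha : a ∉ span k {v})
    (hb : b ∉ span k {a, v}) : span k {b, a, v} = W := by
  have hlt := finrank_span_lt_finrank_span_insert ha
  have hlt' := finrank_span_lt_finrank_span_insert hb
  rw [finrank_span_singleton hv] at hlt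
  refine eq_of_le_of_finrank_le (span_le.2 ?_) (by lia)
  simp [Set.insert_subset_iff, hvW, haW, hbW]

lemma finrank_span_pair_eq_two {v a : V} (hv : v ≠ 0) (ha : a ∉ span k {v}) :
    finrank k (span k {a, v}) = 2 := by
  classical
  refine le_antisymm ?_ (Nat.succ_le_of_lt ?_)
  · rw [← Finset.coe_pair]
    exact (finrank_span_finset_le_card _).trans Finset.card_le_two
  · simpa [finrank_span_singleton hv] using finrank_span_lt_finrank_span_insert ha

lemma inf_eq_span_singleton_of_finrank_eq_two {W₁ W₂ : Submodule k V} (h₁ : finrank k W₁ = 2)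
    (h₂ : finrank k W₂ = 2) (hne : W₁ ≠ W₂) {v : V} (hv : v ≠ 0) (hv₁ : v ∈ W₁) (hv₂ : v ∈ W₂) :
    W₁ ⊓ W₂ = span k {v} := by
  have hlt : finrank k (W₁ ⊓ W₂ : Submodule k V) < finrank k W₁ :=
    finrank_lt_finrank_of_lt <| inf_lt_left.2 fun h =>
      hne (eq_of_le_of_finrank_eq h (h₁.trans h₂.symm))
  refine (eq_of_le_of_finrank_le ((span_singleton_le_iff_mem _ _).2 (mem_inf.2 ⟨hv₁, hv₂⟩)) ?_).symm
  rw [finrank_span_singleton hv]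
  lia

lemma exists_add_mem_span_eq_of_three_planes {H W₁ W₂ W₃ : Submodule k V} {v : V} (hv : v ≠ 0)
    (hH : finrank k H = 3) (h₁ : finrank k W₁ = 2) (h₂ : finrank k W₂ = 2) (h₃ : finrank k W₃ = 2)
    (hW₁ : W₁ ≤ H) (hW₂ : W₂ ≤ H) (hW₃ : W₃ ≤ H) (hv₁ : v ∈ W₁) (hv₂ : v ∈ W₂) (hv₃ : v ∈ W₃)
    (h₁₂ : W₁ ≠ W₂) (h₁₃ : W₁ ≠ W₃) (h₂₃ : W₂ ≠ W₃) :
    ∃ a ∈ W₁, ∃ b ∈ W₂, a + b ∈ W₃ ∧ H = span k {a, b, v} := by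
  have hsup : W₁ ⊔ W₂ = H := by
    have hdim := finrank_sup_add_finrank_inf_eq W₁ W₂
    rw [inf_eq_span_singleton_of_finrank_eq_two h₁ h₂ h₁₂ hv hv₁ hv₂,
      finrank_span_singleton hv] at hdim
    exact eq_of_le_of_finrank_le (sup_le hW₁ hW₂) (by lia)
  obtain ⟨c, hc₃, hc⟩ : ∃ c ∈ W₃, c ∉ span k {v} := by
    refine SetLike.not_le_iff_exists.1 fun h => ?_
    have := finrank_mono h
    rw [finrank_span_singleton hv] at this
    lia
  obtain ⟨a, ha₁, b, hb₂, rfl⟩ := mem_sup.1 (hsup ▸ hW₃ hc₃)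
  have ha : a ∉ span k {v} := fun ha => hc <| by
    rw [← inf_eq_span_singleton_of_finrank_eq_two h₂ h₃ h₂₃ hv hv₂ hv₃]
    exact ⟨add_mem ((span_singleton_le_iff_mem _ _).2 hv₂ ha) hb₂, hc₃⟩
  have hb : b ∉ span k {v} := fun hb => hc <| by
    rw [← inf_eq_span_singleton_of_finrank_eq_two h₁ h₃ h₁₃ hv hv₁ hv₃]
    exact ⟨add_mem ha₁ ((span_singleton_le_iff_mem _ _).2 hv₁ hb), hc₃⟩
  refine ⟨a, ha₁, b, hb₂, hc₃, ?_⟩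
  rw [← hsup, ← span_pair_eq_of_finrank_eq_two h₁ hv hv₁ ha₁ ha,
    ← span_pair_eq_of_finrank_eq_two h₂ hv hv₂ hb₂ hb, ← span_union]
  congr 1
  grind

lemma exists_le_notMem_finrank_le (H : Submodule k V) {v : V} (hv : v ≠ 0) :
    ∃ U ≤ H, v ∉ U ∧ finrank k H ≤ finrank k U + 1 := by
  obtain ⟨C, hC⟩ := Submodule.exists_isCompl (span k {v})
  have hvC : v ∉ C := fun h => hv (disjoint_def.1 hC.disjoint v (mem_span_singleton_self v) h)
  refine ⟨H ⊓ C, inf_le_left, fun h => hvC h.2, ?_⟩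
  have hdim := finrank_sup_add_finrank_inf_eq H C
  have hcompl := finrank_add_eq_of_isCompl hC
  rw [finrank_span_singleton hv] at hcompl
  have hle := finrank_le (H ⊔ C)
  lia

end LinearAlgebra

/-- Trilinear forms on `M`, not necessarily symmetric. They encode cubic forms by restriction to the
diagonal; symmetry is not imposed because in characteristics two and three most cubic forms do not
come from a symmetric trilinear form. -/
abbrev TrilinearForm (R M : Type*) [CommRing R] [AddCommGroup M] [Module R M] :=
  M →ₗ[R] M →ₗ[R] M →ₗ[R] R

namespace TrilinearForm

section Basic

variable {R M : Type*} [CommRing R] [AddCommGroup M] [Module R M]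

/-- The cubic form of `T`: the restriction of `T` to the diagonal. -/
def cubic (T : TrilinearForm R M) (x : M) : R := T x x x

/-- The gradient of the cubic form of `T`: `T.gradient x y` is the derivative at `x` in the
direction `y`. At a point `x` of the surface, `T.gradient x = 0` is the tangent plane. -/
def gradient (T : TrilinearForm R M) : QuadraticMap R M (Dual R M) :=
  LinearMap.BilinMap.toQuadraticMap
    (T + LinearMap.lflip.toLinearMap ∘ₗ T + LinearMap.lflip.toLinearMap ∘ₗ T.flip)

/-- The polar quadric of `v`: the quadratic form `x ↦ T.gradient x v`. -/
def polarQuadric (T : TrilinearForm R M) (v : M) : QuadraticForm R M :=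
  (Dual.eval R M v).compQuadraticMap T.gradient

/-- The cubic form of `T` is nonsingular: it does not vanish together with its gradient at any
nonzero vector. -/
def IsNonsingular (T : TrilinearForm R M) : Prop :=
  ∀ x, T.cubic x = 0 → T.gradient x = 0 → x = 0

/-- `W` is a line of the surface `T.cubic = 0` passing through the point `v`. -/
structure IsLineThrough (T : TrilinearForm R M) (v : M) (W : Submodule R M) : Prop where
  finrank_eq_two : finrank R W = 2
  mem : v ∈ W
  cubic_eq_zero : ∀ x ∈ W, T.cubic x = 0

/-- `v` is a point of the surface whose polar quadric is the union of its tangent plane and the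
plane `f = 0`. -/
structure PolarQuadricSplits (T : TrilinearForm R M) (v : M) (f : Dual R M) : Prop where
  cubic_eq_zero : T.cubic v = 0
  polarQuadric_eq : T.polarQuadric v = QuadraticMap.linMulLin f (T.gradient v)

variable (T : TrilinearForm R M)

lemma gradient_apply (x y : M) : T.gradient x y = T x x y + T x y x + T y x x := rfl

@[simp]
lemma polarQuadric_apply (v x : M) : T.polarQuadric v x = T.gradient x v := rfl

lemma gradient_self (x : M) : T.gradient x x = 3 * T.cubic x := by
  rw [gradient_apply, cubic]
  ring

lemma gradient_self_eq_zero {x : M} (hx : T.cubic x = 0) : T.gradient x x = 0 := by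
  rw [gradient_self, hx, mul_zero]

lemma cubic_smul (t : R) (x : M) : T.cubic (t • x) = t ^ 3 * T.cubic x := by
  simp only [cubic, map_smul, LinearMap.smul_apply, smul_eq_mul]
  ring

lemma cubic_add_smul (x y : M) (t : R) :
    T.cubic (x + t • y) =
      T.cubic x + t * T.gradient x y + t ^ 2 * T.gradient y x + t ^ 3 * T.cubic y := by
  simp only [cubic, gradient_apply, map_add, map_smul, LinearMap.add_apply, LinearMap.smul_apply,
    smul_eq_mul]
  ring

lemma gradient_add_smul (x y : M) (t : R) :
    T.gradient (x + t • y) =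
      T.gradient x + t • QuadraticMap.polar T.gradient x y + t ^ 2 • T.gradient y := by
  rw [QuadraticMap.map_add T.gradient, QuadraticMap.map_smul, QuadraticMap.polar_smul_right, sq]
  abel

lemma polar_gradient_comm (x y z : M) :
    QuadraticMap.polar T.gradient x y z = QuadraticMap.polar T.gradient x z y := by
  simp only [QuadraticMap.polar, gradient_apply, map_add, LinearMap.add_apply, LinearMap.sub_apply]
  ring

lemma polar_gradient_self (x y : M) :
    QuadraticMap.polar T.gradient x y y = 2 * T.gradient y x := by
  rw [QuadraticMap.polar_comm, polar_gradient_comm, QuadraticMap.polar_self]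
  simp

lemma polar_polarQuadric (v x y : M) :
    QuadraticMap.polar (T.polarQuadric v) x y = QuadraticMap.polar T.gradient x v y := by
  rw [polar_gradient_comm]
  rfl

end Basic

section Field

variable {k V : Type*} [Field k] [AddCommGroup V] [Module k V] {T : TrilinearForm k V}

lemma gradient_eq_zero_of_forall_cubic_add_smul_eq_zero [Infinite k] {x y : V}
    (h : ∀ t : k, T.cubic (x + t • y) = 0) : T.gradient x y = 0 := by
  have hcoeff := cubic_coeffs_eq_zero (a := T.cubic y) (b := T.gradient y x)
    (c := T.gradient x y) (d := T.cubic x) fun t => by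
      rw [← h t, cubic_add_smul]
      ring
  exact hcoeff.2.2.1

lemma IsNonsingular.gradient_ne_zero (hT : T.IsNonsingular) {v : V} (hv : v ≠ 0)
    (hcubic : T.cubic v = 0) : T.gradient v ≠ 0 :=
  fun h => hv (hT v hcubic h)

namespace PolarQuadricSplits

variable {v : V} {f : Dual k V}

lemma gradient_apply_self (h : T.PolarQuadricSplits v f) (x : V) :
    T.gradient x v = f x * T.gradient v x := by
  rw [← polarQuadric_apply, h.polarQuadric_eq, QuadraticMap.linMulLin_apply]

lemma polar_gradient (h : T.PolarQuadricSplits v f) (x : V) :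
    QuadraticMap.polar T.gradient x v = f x • T.gradient v + T.gradient v x • f := by
  ext y
  rw [← polar_polarQuadric, h.polarQuadric_eq]
  simp only [QuadraticMap.polar, QuadraticMap.linMulLin_apply, map_add, LinearMap.add_apply,
    LinearMap.smul_apply, smul_eq_mul]
  ring

lemma cubic_add_smul (h : T.PolarQuadricSplits v f) (x : V) (t : k) :
    T.cubic (x + t • v) = T.cubic x + t * (f x + t) * T.gradient v x := by
  rw [TrilinearForm.cubic_add_smul, h.gradient_apply_self, h.cubic_eq_zero]
  ring

lemma gradient_add_smul (h : T.PolarQuadricSplits v f) {x : V} {t : k} :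
    T.gradient (x + t • v) =
      T.gradient x + (t * (f x + t)) • T.gradient v + (t * T.gradient v x) • f := by
  rw [TrilinearForm.gradient_add_smul, h.polar_gradient]
  module

lemma apply_self (h : T.PolarQuadricSplits v f) (hv : T.gradient v ≠ 0) : f v = 2 := by
  obtain ⟨e, he⟩ := LinearMap.surjective hv 1
  have hpolar := congr($(h.polar_gradient v) e)
  rw [QuadraticMap.polar_self] at hpolar
  simpa [he, gradient_self_eq_zero T h.cubic_eq_zero] using hpolar.symm

lemma cubic_preReflection (h : T.PolarQuadricSplits v f) (x : V) :
    T.cubic (preReflection v f x) = T.cubic x := by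
  rw [preReflection_apply, sub_eq_add_neg, ← neg_smul, h.cubic_add_smul]
  ring

end PolarQuadricSplits

end Field

end TrilinearForm

namespace TrilinearForm

variable {k V : Type*} [Field k] [AddCommGroup V] [Module k V] {T : TrilinearForm k V}

section Lines

variable [Infinite k] {v : V}

namespace IsLineThrough

variable {W : Submodule k V}

lemma gradient_apply_eq_zero (hW : T.IsLineThrough v W) {x y : V} (hx : x ∈ W) (hy : y ∈ W) :
    T.gradient x y = 0 :=
  gradient_eq_zero_of_forall_cubic_add_smul_eq_zero fun t =>
    hW.cubic_eq_zero _ (add_mem hx (W.smul_mem t hy))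

lemma le_ker_gradient (hW : T.IsLineThrough v W) : W ≤ LinearMap.ker (T.gradient v) :=
  fun _ hx => hW.gradient_apply_eq_zero hW.mem hx

end IsLineThrough

lemma polarQuadric_eq_zero_of_three_lines [FiniteDimensional k V] (hv : v ≠ 0)
    (hker : finrank k (LinearMap.ker (T.gradient v)) = 3) {W₁ W₂ W₃ : Submodule k V}
    (h₁₂ : W₁ ≠ W₂) (h₁₃ : W₁ ≠ W₃) (h₂₃ : W₂ ≠ W₃) (h₁ : T.IsLineThrough v W₁)
    (h₂ : T.IsLineThrough v W₂) (h₃ : T.IsLineThrough v W₃) {x : V} (hx : T.gradient v x = 0) :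
    T.polarQuadric v x = 0 := by
  obtain ⟨a, ha, b, hb, hab, hspan⟩ :=
    exists_add_mem_span_eq_of_three_planes hv hker
      h₁.finrank_eq_two h₂.finrank_eq_two h₃.finrank_eq_two
      h₁.le_ker_gradient h₂.le_ker_gradient h₃.le_ker_gradient h₁.mem h₂.mem h₃.mem h₁₂ h₁₃ h₂₃
  have hQa : T.polarQuadric v a = 0 := h₁.gradient_apply_eq_zero ha h₁.mem
  have hQb : T.polarQuadric v b = 0 := h₂.gradient_apply_eq_zero hb h₂.mem
  have hQab : T.polarQuadric v (a + b) = 0 := h₃.gradient_apply_eq_zero hab h₃.mem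
  have hQv : T.polarQuadric v v = 0 := h₁.gradient_apply_eq_zero h₁.mem h₁.mem
  have hpolar : QuadraticMap.polar (T.polarQuadric v) a b = 0 := by
    rw [QuadraticMap.polar, hQa, hQb, hQab, sub_zero, sub_zero]
  have hpolar_v (y : V) (hy : T.gradient v y = 0) :
      QuadraticMap.polar (T.polarQuadric v) y v = 0 := by
    rw [polar_polarQuadric, polar_gradient_self, hy, mul_zero]
  obtain ⟨r, s, t, rfl⟩ := mem_span_triple.1 (hspan ▸ LinearMap.mem_ker.2 hx)
  simp only [QuadraticMap.map_add (T.polarQuadric v), QuadraticMap.map_smul,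
    QuadraticMap.polar_add_left, QuadraticMap.polar_smul_left, QuadraticMap.polar_smul_right,
    hQa, hQb, hQv, hpolar, hpolar_v a (h₁.le_ker_gradient ha), hpolar_v b (h₂.le_ker_gradient hb),
    smul_zero, add_zero]

lemma IsNonsingular.exists_polarQuadricSplits_of_three_lines [FiniteDimensional k V]
    (hT : T.IsNonsingular) (hV : finrank k V = 4) (hv : v ≠ 0) {W₁ W₂ W₃ : Submodule k V}
    (h₁₂ : W₁ ≠ W₂) (h₁₃ : W₁ ≠ W₃) (h₂₃ : W₂ ≠ W₃) (h₁ : T.IsLineThrough v W₁)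
    (h₂ : T.IsLineThrough v W₂) (h₃ : T.IsLineThrough v W₃) : ∃ f, T.PolarQuadricSplits v f := by
  have hcubic : T.cubic v = 0 := h₁.cubic_eq_zero v h₁.mem
  have hgrad : T.gradient v ≠ 0 := hT.gradient_ne_zero hv hcubic
  have hker := Module.Dual.finrank_ker_add_one_of_ne_zero hgrad
  obtain ⟨f, hf⟩ := quadraticForm_eq_linMulLin_of_ker hgrad fun x =>
    polarQuadric_eq_zero_of_three_lines hv (by lia) h₁₂ h₁₃ h₂₃ h₁ h₂ h₃
  exact ⟨f, hcubic, hf⟩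

end Lines

variable [IsAlgClosed k]

lemma exists_cubic_add_smul_eq_zero {a : V} (ha : T.cubic a ≠ 0) (b : V) :
    ∃ t : k, T.cubic (b + t • a) = 0 := by
  obtain ⟨t, ht⟩ :=
    exists_cubic_eq_zero_of_isAlgClosed ha (T.gradient a b) (T.gradient b a) (T.cubic b)
  refine ⟨t, ?_⟩
  rw [cubic_add_smul]
  linear_combination ht

lemma exists_gradient_add_smul_apply_eq_zero {a e : V} (ha : T.gradient a e ≠ 0) (b : V) :
    ∃ t : k, T.gradient (b + t • a) e = 0 := by
  obtain ⟨t, ht⟩ := exists_quadratic_eq_zero_of_isAlgClosed ha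
    (QuadraticMap.polar T.gradient b a e) (T.gradient b e)
  refine ⟨t, ?_⟩
  simp only [gradient_add_smul, LinearMap.add_apply, LinearMap.smul_apply, smul_eq_mul]
  linear_combination ht

lemma exists_mem_cubic_eq_zero (T : TrilinearForm k V) {U : Submodule k V}
    (hU : 1 < finrank k U) : ∃ x ∈ U, x ≠ 0 ∧ T.cubic x = 0 :=
  exists_mem_ne_zero_eq_zero_of_one_lt_finrank (fun _ b ha => exists_cubic_add_smul_eq_zero ha b) hU

lemma exists_mem_gradient_apply_eq_zero (T : TrilinearForm k V) {U : Submodule k V}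
    (hU : 1 < finrank k U) (e : V) : ∃ x ∈ U, x ≠ 0 ∧ T.gradient x e = 0 :=
  exists_mem_ne_zero_eq_zero_of_one_lt_finrank (g := fun x => T.gradient x e)
    (fun _ b ha => exists_gradient_add_smul_apply_eq_zero ha b) hU

lemma exists_gradient_add_smul_add_smul_eq_zero_of_two_eq_zero (htwo : (2 : k) = 0) {a b : V}
    (ha : T.cubic a = 0) (hab : T.gradient a b ≠ 0) (hba : T.gradient b a ≠ 0) (e : V) :
    ∃ r s : k, T.gradient (e + r • b + s • a) a = 0 ∧ T.gradient (e + r • b + s • a) b = 0 := by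
  obtain ⟨r, hr⟩ := exists_gradient_add_smul_apply_eq_zero hba e
  obtain ⟨s, hs⟩ := exists_gradient_add_smul_apply_eq_zero hab (e + r • b)
  refine ⟨r, s, ?_, hs⟩
  rw [gradient_add_smul, LinearMap.add_apply, LinearMap.add_apply, hr, LinearMap.smul_apply,
    LinearMap.smul_apply, polar_gradient_self, htwo, gradient_self_eq_zero T ha]
  simp

variable {v : V} {f : Dual k V}

lemma PolarQuadricSplits.mem_span_of_ker_gradient_le (h : T.PolarQuadricSplits v f)
    (hT : T.IsNonsingular) (hv : v ≠ 0) {x : V} (hx : T.cubic x = 0) (hvx : T.gradient v x = 0)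
    (hker : LinearMap.ker (T.gradient v) ≤ LinearMap.ker (T.gradient x)) : x ∈ span k {v} := by
  obtain ⟨e, he⟩ := LinearMap.surjective (hT.gradient_ne_zero hv h.cubic_eq_zero) 1
  obtain ⟨t, ht⟩ := exists_quadratic_eq_zero_of_isAlgClosed one_ne_zero (f x) (T.gradient x e)
  have hgrad : T.gradient (x + t • v) = T.gradient x + (t * (f x + t)) • T.gradient v := by
    rw [h.gradient_add_smul, hvx, mul_zero, zero_smul, add_zero]
  have hsing : x + t • v = 0 := by
    refine hT _ (by rw [h.cubic_add_smul, hx, hvx, mul_zero, add_zero]) ?_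
    refine dual_eq_zero_of_ker_le (f := T.gradient v) (e := e) (fun y hy => ?_)
      (by simp [he]) ?_
    · rw [LinearMap.mem_ker, hgrad, LinearMap.add_apply, LinearMap.smul_apply,
        LinearMap.mem_ker.1 hy, LinearMap.mem_ker.1 (hker hy), smul_zero, add_zero]
    · rw [hgrad, LinearMap.add_apply, LinearMap.smul_apply, he, smul_eq_mul]
      linear_combination ht
  rw [eq_neg_of_add_eq_zero_left hsing]
  exact neg_mem (smul_mem _ t (mem_span_singleton_self v))

variable [FiniteDimensional k V]

lemma IsNonsingular.exists_cubic_ne_zero (hT : T.IsNonsingular) (hV : 2 < finrank k V)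
    {l : Dual k V} (hl : l ≠ 0) : ∃ x, l x = 0 ∧ T.cubic x ≠ 0 := by
  by_contra! hzero
  obtain ⟨e, he⟩ := LinearMap.surjective hl 1
  have hker := Module.Dual.finrank_ker_add_one_of_ne_zero hl
  obtain ⟨x, hx, hx0, hxe⟩ :=
    T.exists_mem_gradient_apply_eq_zero (U := LinearMap.ker l) (by lia) e
  refine hT.gradient_ne_zero hx0 (hzero x hx)
    (dual_eq_zero_of_ker_le (f := l) (e := e) (fun y hy => ?_) (by simp [he]) hxe)
  refine gradient_eq_zero_of_forall_cubic_add_smul_eq_zero fun t => hzero _ ?_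
  rw [map_add, map_smul, hx, hy, smul_zero, add_zero]

namespace PolarQuadricSplits

lemma exists_tangent_basis (h : T.PolarQuadricSplits v f) (hT : T.IsNonsingular)
    (hV : finrank k V = 4) (hv : v ≠ 0) :
    ∃ a b, T.cubic a = 0 ∧ T.cubic b = 0 ∧ T.gradient a b ≠ 0 ∧ T.gradient b a ≠ 0 ∧
      span k {b, a, v} = LinearMap.ker (T.gradient v) := by
  have hker := Module.Dual.finrank_ker_add_one_of_ne_zero (hT.gradient_ne_zero hv h.cubic_eq_zero)
  obtain ⟨U, hU, hvU, hfinrank⟩ := exists_le_notMem_finrank_le (LinearMap.ker (T.gradient v)) hv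
  obtain ⟨a, haU, ha0, ha⟩ := T.exists_mem_cubic_eq_zero (U := U) (by lia)
  have hav : a ∉ span k {v} := fun hmem => by
    obtain ⟨c, rfl⟩ := mem_span_singleton.1 hmem
    exact hvU ((U.smul_mem_iff (left_ne_zero_of_smul ha0)).1 haU)
  obtain ⟨b₀, hb₀, hab₀⟩ := SetLike.not_le_iff_exists.1 fun hle =>
    hav (h.mem_span_of_ker_gradient_le hT hv ha (hU haU) hle)
  obtain ⟨s, hs⟩ := exists_quadratic_eq_zero_of_isAlgClosed hab₀ (T.gradient b₀ a) (T.cubic b₀)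
  obtain ⟨b, hb⟩ : ∃ b, b = b₀ + s • a := ⟨_, rfl⟩
  have hb_mem : b ∈ LinearMap.ker (T.gradient v) := hb ▸ add_mem hb₀ (smul_mem _ s (hU haU))
  have hb_cubic : T.cubic b = 0 := by
    rw [hb, TrilinearForm.cubic_add_smul, ha]
    linear_combination hs
  have hab : T.gradient a b ≠ 0 := by
    rwa [hb, map_add, map_smul, gradient_self_eq_zero T ha, smul_zero, add_zero]
  have hbav : b ∉ span k {a, v} := fun hmem => hab <| by
    refine span_le (p := LinearMap.ker (T.gradient a)).2 ?_ hmem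
    simp [Set.insert_subset_iff, gradient_self_eq_zero T ha, h.gradient_apply_self,
      LinearMap.mem_ker.1 (hU haU)]
  have hspan := span_triple_eq_of_finrank_eq_three (by lia) hv
    (LinearMap.mem_ker.2 (gradient_self_eq_zero T h.cubic_eq_zero)) (hU haU) hb_mem hav hbav
  refine ⟨a, b, ha, hb_cubic, hab, fun hba => hbav ?_, hspan⟩
  refine span_mono (by simp) (h.mem_span_of_ker_gradient_le hT hv hb_cubic hb_mem ?_)
  rw [← hspan, span_le]
  simp [Set.insert_subset_iff, gradient_self_eq_zero T hb_cubic, hba, h.gradient_apply_self,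
    LinearMap.mem_ker.1 hb_mem]

lemma ne_zero (h : T.PolarQuadricSplits v f) (hT : T.IsNonsingular) (hV : finrank k V = 4)
    (hv : v ≠ 0) : f ≠ 0 := by
  rintro rfl
  have hgrad := hT.gradient_ne_zero hv h.cubic_eq_zero
  have htwo : (2 : k) = 0 := (h.apply_self hgrad).symm
  obtain ⟨e, he⟩ := LinearMap.surjective hgrad 1
  obtain ⟨a, b, ha, -, hab, hba, hspan⟩ := h.exists_tangent_basis hT hV hv
  have hva : T.gradient v a = 0 := LinearMap.mem_ker.1 (hspan ▸ subset_span (by simp))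
  have hvb : T.gradient v b = 0 := LinearMap.mem_ker.1 (hspan ▸ subset_span (by simp))
  obtain ⟨r, s, hpa, hpb⟩ :=
    exists_gradient_add_smul_add_smul_eq_zero_of_two_eq_zero htwo ha hab hba e
  obtain ⟨p, hp⟩ : ∃ p, p = e + r • b + s • a := ⟨_, rfl⟩
  rw [← hp] at hpa hpb
  have hvp : T.gradient v p = 1 := by simp [hp, he, hva, hvb]
  -- The gradients at `p` and `v` are proportional, and translating `p` along `v` adds a square
  -- multiple of the latter to the former, so a suitable translate is singular.
  obtain ⟨t, ht⟩ := IsAlgClosed.exists_pow_nat_eq (-T.gradient p e) two_pos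
  have hgrad_q : T.gradient (p + t • v) = T.gradient p + t ^ 2 • T.gradient v := by
    simp [h.gradient_add_smul, sq]
  have hq : T.gradient (p + t • v) = 0 := by
    refine dual_eq_zero_of_ker_le (f := T.gradient v) (e := e) ?_ (by simp [he]) ?_
    · rw [← hspan, span_le]
      simp [Set.insert_subset_iff, hgrad_q, hpa, hpb, hva, hvb, h.gradient_apply_self p,
        gradient_self_eq_zero T h.cubic_eq_zero]
    · simp [hgrad_q, ht, he]
  have hq_cubic : T.cubic (p + t • v) = 0 := by
    have := gradient_self T (p + t • v)
    rw [hq, LinearMap.zero_apply] at this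
    linear_combination -this - T.cubic (p + t • v) * htwo
  have := congr(T.gradient v $(hT _ hq_cubic hq))
  simp [hvp, gradient_self_eq_zero T h.cubic_eq_zero] at this

end PolarQuadricSplits

end TrilinearForm

namespace TrilinearForm

variable {k V : Type*} [Field k] [AddCommGroup V] [Module k V] {T : TrilinearForm k V}
  {v : V} {f : Dual k V}

namespace PolarQuadricSplits

lemma isLineThrough_span_pair [FiniteDimensional k V] (h : T.PolarQuadricSplits v f) (hv : v ≠ 0)
    {x : V} (hx : T.cubic x = 0) (hvx : T.gradient v x = 0) (hxv : x ∉ span k {v}) :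
    T.IsLineThrough v (span k {x, v}) where
  finrank_eq_two := finrank_span_pair_eq_two hv hxv
  mem := subset_span (by simp)
  cubic_eq_zero y hy := by
    obtain ⟨r, s, rfl⟩ := mem_span_pair.1 hy
    simp [h.cubic_add_smul, cubic_smul, hx, hvx]

lemma exists_three_lines [IsAlgClosed k] [FiniteDimensional k V] (h : T.PolarQuadricSplits v f)
    (hT : T.IsNonsingular) (hV : finrank k V = 4) (hv : v ≠ 0) :
    ∃ W₁ W₂ W₃, W₁ ≠ W₂ ∧ W₁ ≠ W₃ ∧ W₂ ≠ W₃ ∧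
      T.IsLineThrough v W₁ ∧ T.IsLineThrough v W₂ ∧ T.IsLineThrough v W₃ := by
  obtain ⟨a, b, ha, hb, hab, hba, hspan⟩ := h.exists_tangent_basis hT hV hv
  have hva : T.gradient v a = 0 := LinearMap.mem_ker.1 (hspan ▸ subset_span (by simp))
  have hvb : T.gradient v b = 0 := LinearMap.mem_ker.1 (hspan ▸ subset_span (by simp))
  obtain ⟨s, hs0, hs⟩ : ∃ s ≠ 0, T.gradient b a + s * T.gradient a b = 0 :=
    ⟨-T.gradient b a / T.gradient a b, by simp [hab, hba], by field_simp; ring⟩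
  have hc : T.cubic (b + s • a) = 0 := by
    rw [TrilinearForm.cubic_add_smul, ha, hb]
    linear_combination s * hs
  have hvc : T.gradient v (b + s • a) = 0 := by simp [hva, hvb]
  have hac : T.gradient a (b + s • a) ≠ 0 := by
    simpa [gradient_self_eq_zero T ha] using hab
  have hbc : T.gradient b (b + s • a) ≠ 0 := by
    simpa [gradient_self_eq_zero T hb, hs0] using hba
  have hnotMem {x y : V} (hvx : T.gradient v x = 0) (hxy : T.gradient x y ≠ 0) :
      y ∉ span k {v} := fun hy => by
    obtain ⟨c, rfl⟩ := mem_span_singleton.1 hy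
    simp [h.gradient_apply_self x, hvx] at hxy
  have line_a := h.isLineThrough_span_pair hv ha hva (hnotMem hvb hba)
  have line_b := h.isLineThrough_span_pair hv hb hvb (hnotMem hva hab)
  have line_c := h.isLineThrough_span_pair hv hc hvc (hnotMem hva hac)
  have hne {x y : V} (hW : T.IsLineThrough v (span k {x, v})) (hxy : T.gradient x y ≠ 0) :
      span k {x, v} ≠ span k {y, v} := fun heq =>
    hxy (hW.gradient_apply_eq_zero (subset_span (by simp)) (heq ▸ subset_span (by simp)))
  exact ⟨_, _, _, hne line_a hab, hne line_a hac, hne line_b hbc, line_a, line_b, line_c⟩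

end PolarQuadricSplits

lemma polarQuadricSplits_of_cubic_preReflection [Infinite k] (hf : f ≠ 0) (hfv : f v = 2)
    (h : ∀ x, T.cubic (preReflection v f x) = T.cubic x) : T.PolarQuadricSplits v f := by
  have hmul (x : V) : f x * (T.polarQuadric v - .linMulLin f (T.gradient v) +
      T.cubic v • .linMulLin f f) x = 0 := by
    have hx := h x
    rw [preReflection_apply, sub_eq_add_neg, ← neg_smul, cubic_add_smul] at hx
    simp only [_root_.add_apply, _root_.sub_apply, _root_.smul_apply,
      QuadraticMap.linMulLin_apply, polarQuadric_apply, smul_eq_mul]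
    linear_combination -hx
  have hQ := quadraticForm_eq_zero_of_mul_eq_zero hf hmul
  have hcubic : T.cubic v = 0 := by
    have hQv := congr($hQ v)
    simp only [_root_.add_apply, _root_.sub_apply, _root_.smul_apply,
      QuadraticMap.linMulLin_apply, polarQuadric_apply, smul_eq_mul, _root_.zero_apply,
      gradient_self, hfv] at hQv
    linear_combination hQv
  exact ⟨hcubic, by simpa [hcubic, sub_eq_zero] using hQ⟩

variable [IsAlgClosed k] [FiniteDimensional k V]

lemma IsNonsingular.exists_three_lines_iff (hT : T.IsNonsingular) (hV : finrank k V = 4)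
    (hv : v ≠ 0) :
    (∃ W₁ W₂ W₃, W₁ ≠ W₂ ∧ W₁ ≠ W₃ ∧ W₂ ≠ W₃ ∧
      T.IsLineThrough v W₁ ∧ T.IsLineThrough v W₂ ∧ T.IsLineThrough v W₃) ↔
      ∃ f ≠ 0, T.PolarQuadricSplits v f := by
  constructor
  · rintro ⟨W₁, W₂, W₃, h₁₂, h₁₃, h₂₃, h₁, h₂, h₃⟩
    obtain ⟨f, hf⟩ := hT.exists_polarQuadricSplits_of_three_lines hV hv h₁₂ h₁₃ h₂₃ h₁ h₂ h₃
    exact ⟨f, hf.ne_zero hT hV hv, hf⟩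
  · rintro ⟨f, -, hf⟩
    exact hf.exists_three_lines hT hV hv

lemma IsNonsingular.polarQuadricSplits_iff (hT : T.IsNonsingular) (hV : 2 < finrank k V)
    (hv : v ≠ 0) (hf : f ≠ 0) :
    T.PolarQuadricSplits v f ↔
      f v = 2 ∧ ∃ c : kˣ, ∀ x, T.cubic (preReflection v f x) = c * T.cubic x := by
  refine ⟨fun h => ⟨h.apply_self (hT.gradient_ne_zero hv h.cubic_eq_zero), 1,
    fun x => by simp [h.cubic_preReflection]⟩, ?_⟩
  rintro ⟨hfv, c, hc⟩
  obtain ⟨x, hfx, hx⟩ := hT.exists_cubic_ne_zero hV hf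
  have hc_one : (c : k) = 1 := by
    have := hc x
    rwa [preReflection_apply, hfx, zero_smul, sub_zero, eq_comm, mul_eq_right₀ hx] at this
  exact polarQuadricSplits_of_cubic_preReflection hf hfv fun x => by rw [hc, hc_one, one_mul]

end TrilinearForm

section Reflections

variable {k V : Type*} [Field k] [AddCommGroup V] [Module k V] {v : V}

lemma exists_eq_preReflection_of_range_le (hv : v ≠ 0) {g : Module.End k V}
    (hg : LinearMap.range (g - 1) ≤ span k {v}) : ∃ f : Dual k V, g = preReflection v f := by
  refine ⟨-(LinearEquiv.toSpanNonzeroSingleton k V v hv).symm.toLinearMap ∘ₗ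
    (g - 1).codRestrict _ fun x => hg (LinearMap.mem_range_self _ x), LinearMap.ext fun x => ?_⟩
  rw [preReflection_apply]
  simp only [LinearMap.neg_apply, LinearMap.comp_apply, LinearEquiv.coe_coe, neg_smul,
    LinearEquiv.toSpanNonzeroSingleton_symm_apply_smul, LinearMap.codRestrict_apply,
    LinearMap.sub_apply, Module.End.one_apply]
  abel

lemma range_preReflection_sub_one {f : Dual k V} (hf : f ≠ 0) :
    LinearMap.range (preReflection v f - 1) = span k {v} := by
  have h : preReflection v f - 1 = -f.smulRight v := by
    ext x
    simp [preReflection_apply]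
  rw [h, LinearMap.range_neg, LinearMap.range_smulRight_apply hf]

lemma exists_preReflection_iff (hv : v ≠ 0) (g : Module.End k V) :
    (g * g = 1 ∧ LinearMap.range (g - 1) = span k {v}) ↔
      ∃ f : Dual k V, f ≠ 0 ∧ f v = 2 ∧ g = preReflection v f := by
  constructor
  · rintro ⟨hinv, hrange⟩
    obtain ⟨f, rfl⟩ := exists_eq_preReflection_of_range_le hv hrange.le
    have hf : f ≠ 0 := by
      rintro rfl
      have h : preReflection v (0 : Dual k V) - 1 = 0 := by
        ext x
        simp [preReflection_apply]
      rw [h, LinearMap.range_zero, eq_comm, span_singleton_eq_bot] at hrange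
      exact hv hrange
    refine ⟨f, hf, ?_, rfl⟩
    obtain ⟨e, he⟩ := LinearMap.surjective hf 1
    have hfv : (f v - 2) • v = 0 := calc
      (f v - 2) • v = preReflection v f (preReflection v f e) - e := by
        simp only [preReflection_apply, map_sub, map_smul, he]
        module
      _ = 0 := by rw [← Module.End.mul_apply, hinv, Module.End.one_apply, sub_self]
    exact sub_eq_zero.1 ((smul_eq_zero.1 hfv).resolve_right hv)
  · rintro ⟨f, hf, hfv, rfl⟩
    exact ⟨LinearMap.ext (involutive_preReflection hfv), range_preReflection_sub_one hf⟩

lemma matrix_reflection_iff {n : Type*} [Fintype n] [DecidableEq n] {v : n → k} (hv : v ≠ 0)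
    (A : Matrix n n k) :
    (A * A = 1 ∧ (A - 1).rank = 1 ∧ LinearMap.range (A - 1).mulVecLin = span k {v}) ↔
      ∃ f : Dual k (n → k), f ≠ 0 ∧ f v = 2 ∧ toLinAlgEquiv' A = preReflection v f := by
  rw [← exists_preReflection_iff hv, ← map_mul, ← map_one toLinAlgEquiv', ← map_sub,
    toLinAlgEquiv'.injective.eq_iff]
  refine and_congr_right fun _ => ⟨And.right, fun h => ⟨?_, h⟩⟩
  rw [Matrix.rank]
  exact (congrArg (fun W : Submodule k (n → k) => finrank k W) h).trans (finrank_span_singleton hv)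

end Reflections

section Polynomials

lemma exists_monomial_eq_C_mul_X_mul_X_mul_X {σ R : Type*} [CommSemiring R] {d : σ →₀ ℕ}
    (hd : d.degree = 3) (c : R) : ∃ i j l, monomial d c = C c * (X i * (X j * X l)) := by
  classical
  obtain ⟨i, j, l, h⟩ := Multiset.card_eq_three.1 ((Finsupp.card_toMultiset d).trans hd)
  refine ⟨i, j, l, ?_⟩
  rw [← Finsupp.toMultiset_toFinsupp d, h]
  simp only [X, C_apply, monomial_mul]
  simp [Multiset.insert_eq_cons, ← Multiset.singleton_add]

lemma eval_substMatrix {k : Type*} [Field k] (A : Matrix (Fin 4) (Fin 4) k)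
    (F : MvPolynomial (Fin 4) k) (x : Fin 4 → k) :
    eval x (substMatrix A F) = eval (A *ᵥ x) F := by
  have h : (aeval x).comp (aeval fun i => ∑ j, C (A i j) * X j) = aeval (R := k) (A *ᵥ x) := by
    ext i
    simp [mulVec, dotProduct]
  exact congr($h F)

end Polynomials

namespace TrilinearForm

/-- The cubic form of `T` and its gradient are those of the polynomial `F`. The partial derivatives
are part of the definition because over a finite field the values of `F` do not determine them. -/
structure Represents {σ R : Type*} [DecidableEq σ] [CommRing R] (T : TrilinearForm R (σ → R))
    (F : MvPolynomial σ R) : Prop where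
  eval_eq : ∀ x, eval x F = T.cubic x
  eval_pderiv : ∀ x i, eval x (pderiv i F) = T.gradient x (Pi.single i 1)

section Represents

variable {σ R : Type*} [DecidableEq σ] [CommRing R] {F : MvPolynomial σ R}

lemma represents_zero : (0 : TrilinearForm R (σ → R)).Represents 0 where
  eval_eq x := by simp [cubic]
  eval_pderiv x i := by simp [gradient_apply]

lemma Represents.add {S T : TrilinearForm R (σ → R)} {F G : MvPolynomial σ R}
    (hS : S.Represents F) (hT : T.Represents G) : (S + T).Represents (F + G) where
  eval_eq x := by simp [hS.eval_eq, hT.eval_eq, cubic]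
  eval_pderiv x i := by
    simp only [map_add, hS.eval_pderiv, hT.eval_pderiv, gradient_apply, LinearMap.add_apply]
    ring

lemma exists_represents_C_mul_X_mul_X_mul_X (c : R) (i j l : σ) :
    ∃ T : TrilinearForm R (σ → R), T.Represents (C c * (X i * (X j * X l))) := by
  refine ⟨(LinearMap.proj i).smulRight ((LinearMap.proj j).smulRight (c • LinearMap.proj l)),
    fun x => ?_, fun x m => ?_⟩
  · simp only [map_mul, eval_C, eval_X, cubic, LinearMap.coe_smulRight, LinearMap.coe_proj,
      Function.eval, LinearMap.smul_apply, smul_eq_mul]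
    ring
  · simp only [Derivation.leibniz, derivation_C, pderiv_X, Pi.single_apply, apply_ite (eval x),
      map_mul, map_add, map_zero, eval_C, eval_X, gradient_apply, LinearMap.coe_smulRight,
      LinearMap.coe_proj, LinearMap.smul_apply, Function.eval, smul_eq_mul, mul_ite, ite_mul,
      mul_one, one_mul, mul_zero, zero_mul, add_zero]
    split_ifs <;> ring

lemma exists_represents (hF : F.IsHomogeneous 3) :
    ∃ T : TrilinearForm R (σ → R), T.Represents F := by
  rw [F.as_sum]
  refine Finset.sum_induction _ (fun G => ∃ T : TrilinearForm R (σ → R), T.Represents G) ?_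
    ⟨0, represents_zero⟩ fun d hd => ?_
  · rintro G G' ⟨S, hS⟩ ⟨T, hT⟩
    exact ⟨S + T, hS.add hT⟩
  · have hdeg : d.degree = 3 := by
      rw [Finsupp.degree_eq_weight_one]
      exact hF (mem_support_iff.1 hd)
    obtain ⟨i, j, l, h⟩ := exists_monomial_eq_C_mul_X_mul_X_mul_X hdeg (F.coeff d)
    rw [h]
    exact exists_represents_C_mul_X_mul_X_mul_X _ i j l

end Represents

section Surface

variable {k : Type*} [Field k]

namespace Represents

variable {T : TrilinearForm k (Fin 4 → k)} {F : MvPolynomial (Fin 4) k}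

lemma isNonsingular (hT : T.Represents F)
    (hF : ∀ x : Fin 4 → k, eval x F = 0 → (∀ i, eval x (pderiv i F) = 0) → x = 0) :
    T.IsNonsingular := fun x hx hgrad =>
  hF x (by rw [hT.eval_eq, hx]) fun i => by rw [hT.eval_pderiv, hgrad, LinearMap.zero_apply]

lemma leavesInvariant_iff [Infinite k] (hT : T.Represents F) (A : Matrix (Fin 4) (Fin 4) k) :
    LeavesInvariant A F ↔ ∃ c : kˣ, ∀ x, T.cubic (A *ᵥ x) = c * T.cubic x := by
  refine exists_congr fun c => ?_
  simp only [MvPolynomial.funext_iff, eval_substMatrix, smul_eval, hT.eval_eq]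

lemma isLineThrough_iff (hT : T.Represents F) {v : Fin 4 → k} {W : Submodule k (Fin 4 → k)} :
    T.IsLineThrough v W ↔ IsLineIn F W ∧ span k {v} ≤ W := by
  simp only [IsLineIn, VanishesOn, hT.eval_eq, span_singleton_le_iff_mem]
  exact ⟨fun h => ⟨⟨h.finrank_eq_two, h.cubic_eq_zero⟩, h.mem⟩, fun h => ⟨h.1.1, h.2, h.1.2⟩⟩

lemma isEckardtPoint_iff (hT : T.Represents F) {v : Fin 4 → k} (hv : v ≠ 0) :
    IsEckardtPoint F (span k {v}) ↔ ∃ W₁ W₂ W₃, W₁ ≠ W₂ ∧ W₁ ≠ W₃ ∧ W₂ ≠ W₃ ∧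
      T.IsLineThrough v W₁ ∧ T.IsLineThrough v W₂ ∧ T.IsLineThrough v W₃ := by
  simp only [IsEckardtPoint, hT.isLineThrough_iff, finrank_span_singleton hv, true_and]
  grind

lemma exists_reflection_iff [Infinite k] (hT : T.Represents F) {v : Fin 4 → k} (hv : v ≠ 0) :
    (∃ A : Matrix (Fin 4) (Fin 4) k, A * A = 1 ∧ (A - 1).rank = 1 ∧ LeavesInvariant A F ∧
      LinearMap.range (A - 1).mulVecLin = span k {v}) ↔
      ∃ f : Dual k (Fin 4 → k), f ≠ 0 ∧ f v = 2 ∧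
        ∃ c : kˣ, ∀ x, T.cubic (preReflection v f x) = c * T.cubic x := by
  simp only [hT.leavesInvariant_iff, ← toLinAlgEquiv'_apply]
  constructor
  · rintro ⟨A, hA, hrank, hinv, hrange⟩
    obtain ⟨f, hf, hfv, hAf⟩ := (matrix_reflection_iff hv A).1 ⟨hA, hrank, hrange⟩
    exact ⟨f, hf, hfv, hAf ▸ hinv⟩
  · rintro ⟨f, hf, hfv, hinv⟩
    obtain ⟨A, hAf⟩ := toLinAlgEquiv'.surjective (preReflection v f)
    obtain ⟨hA, hrank, hrange⟩ := (matrix_reflection_iff hv A).2 ⟨f, hf, hfv, hAf⟩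
    exact ⟨A, hA, hrank, hAf ▸ hinv, hrange⟩

end Represents

end Surface

end TrilinearForm

/-- A point of `ℙ³(k)` is an Eckardt point of a smooth cubic
surface `V(F)` if and only if it is the center of a reflection leaving `V(F)`
invariant. -/
theorem stmt1 {k : Type*} [Field k] [IsAlgClosed k]
    (F : MvPolynomial (Fin 4) k) (hF0 : F ≠ 0) (hhom : F.IsHomogeneous 3)
    (hsmooth : ∀ x : Fin 4 → k,
      eval x F = 0 → (∀ i, eval x (pderiv i F) = 0) → x = 0)
    (L : Submodule k (Fin 4 → k)) (hL : Module.finrank k L = 1) :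
    IsEckardtPoint F L ↔
      ∃ A : Matrix (Fin 4) (Fin 4) k,
        A * A = 1 ∧ (A - 1).rank = 1 ∧ LeavesInvariant A F ∧
        LinearMap.range (A - 1).mulVecLin = L := by
  obtain ⟨v, hv, rfl⟩ := (atom_iff_nonzero_span L).1 (isAtom_iff_finrank_eq_one.2 hL)
  obtain ⟨T, hT⟩ := TrilinearForm.exists_represents hhom
  have hns : T.IsNonsingular := hT.isNonsingular hsmooth
  have hdim : finrank k (Fin 4 → k) = 4 := by simp
  calc
    IsEckardtPoint F (span k {v}) ↔ ∃ f ≠ 0, T.PolarQuadricSplits v f := by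
      rw [hT.isEckardtPoint_iff hv, hns.exists_three_lines_iff hdim hv]
    _ ↔ ∃ f : Dual k (Fin 4 → k), f ≠ 0 ∧ f v = 2 ∧
          ∃ c : kˣ, ∀ x, T.cubic (preReflection v f x) = c * T.cubic x :=
      exists_congr fun f => and_congr_right fun hf =>
        hns.polarQuadricSplits_iff (by rw [hdim]; norm_num) hv hf
    _ ↔ _ := (hT.exists_reflection_iff hv).symm
end
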